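/- Let H be a separable real Hilbert space, (Ω, μ) a probability space, φ : Ω → H and ψ₁, …, ψ_d : Ω → H measurable maps. Let C = ∫_Ω φ(x) ⊗ φ(x) dμ(x) and D = ∫_Ω ∑_{j=1}^d ψ_j(x) ⊗ ψ_j(x) dμ(x), both positive self-adjoint, with C of finite trace Tr C. Fix λ > 0, let N_λ ≥ 0 satisfy ‖(D + λI)^{−1/2} φ(x)‖² ≤ N_λ for all x ∈ Ω, and let P > 0 satisfy 1/P ≤ ‖(D + λI)^{−1/2} C (D + λI)^{−1/2}‖ ≤ P. Let x₁, …, xₙ be i.i.d. samples from μ and Ĉₙ = (1/n) ∑_{i=1}^n φ(x_i) ⊗ φ(x_i). Then for every δ ∈ (0, 1], with probability at least 1 − δ, ‖ (D + λI)^{−1/2} (Ĉₙ − C) (D + λI)^{−1/2} ‖ ≤ 4 N_λ log( 2 P Tr C / (λ δ) ) / (3n) + √( 2 P N_λ log( 4 P Tr C / (λ δ) ) / n ). -/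

import Mathlib

open MeasureTheory RealInnerProductSpace

/-!
Write `R = (D + λI)^{-1/2}`, `f = R ∘ φ` and `M = R C R = E[f ⊗ f]`. The deviation to be bounded is
that of the empirical second moment of the vectors `f (x i)`, with `‖f‖² ≤ N_λ`, `‖M‖ ≤ P` and
`Tr M ≤ T := Tr C / λ` (because `λ R² ≤ 1`). The estimate is a matrix Bernstein inequality in which
the dimension is replaced by the ratio `T / P`.

*Finite dimension.* For i.i.d. centred symmetric matrices `Z` with `‖Z‖ ≤ u < 3` and `E[Z²] ≤ V`,
where `‖V‖ ≤ v` and `tr V ≤ τ`, the Golden–Thompson inequality (`RegCov.golden_thompson`) and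
`exp z ≤ 1 + z + κ z²` give `E tr exp (S + Z) ≤ tr exp S + κ tr (V exp S)` for fixed `S`. Since
`exp S - 1 - S ≥ 0`, one has `tr (V exp S) ≤ tr V + tr (V S) + v tr (exp S - 1 - S)`. With `S` the sum
of the preceding matrices, the linear terms average out, so `J n = E tr (exp Sₙ - 1)` satisfies
`J (n + 1) ≤ J n + κ (τ + v J n)`, whence `J n ≤ (τ / v) ((1 + κ v)^n - 1)` (`RegCov.mgf_bound`).
Markov's inequality for `tr (cosh Sₙ - 1)` turns this into a two-sided tail bound
(`RegCov.tail_bound`). Golden–Thompson itself follows from the Lie product formula and the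
inequalities `tr (P Q)^(2^k) ≤ tr (P^(2^k) Q^(2^k))` of `RegCov.trace_pow_two_pow`.

*Constants.* Applied to `θ (f ⊗ f - M)` with the optimal `θ`, this shows that the deviation exceeds
`N_λ β / (3n) + √(2 P N_λ β / n)` with probability at most `(32 / 9) (T / P) exp (-β)`
(`RegCov.finite_dim_tail`), provided `β ≥ log 4`. Take `β = log (4 P T / δ)`. The hypothesis
`1 / P ≤ ‖M‖ ≤ P` gives `P ≥ 1`, and with `‖M‖ ≤ Tr M ≤ T` it gives `P T ≥ 1`. Hence `β ≥ log 4`, the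
probability is at most `(8 / 9) δ / P² ≤ δ`, and `β ≤ 4 (β - log 2)`, which is how the first
logarithm of the claim, with the factor `2` in place of `4`, arises (`RegCov.threshold_le`).

*Infinite dimension.* If a symmetric operator has norm greater than `s`, its quadratic form exceeds `s`
already on the span of finitely many vectors of a Hilbert basis. The corresponding events increase with the
finite set of vectors and each obeys the same finite-dimensional bound, so the bound holds for their
union (`RegCov.hilbert_tail`).
-/

namespace RegCov
open Matrix Filter Topology

/-! ### The Lie product formula and the Golden–Thompson inequality -/

theorem norm_pow_sub_pow_le {𝔸 : Type*} [NormedRing 𝔸] [NormOneClass 𝔸] {a b : 𝔸} {M : ℝ}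
    (hM : 1 ≤ M) (ha : ‖a‖ ≤ M) (hb : ‖b‖ ≤ M) (j : ℕ) :
    ‖a ^ j - b ^ j‖ ≤ j * M ^ j * ‖a - b‖ := by
  induction j with
  | zero => simp
  | succ j ih =>
    have h1 : a ^ (j + 1) - b ^ (j + 1) = a * (a ^ j - b ^ j) + (a - b) * b ^ j := by
      rw [pow_succ' a, pow_succ' b]; noncomm_ring
    have hbj : ‖b ^ j‖ ≤ M ^ j := (norm_pow_le b j).trans (by gcongr)
    have hMj : M ^ j ≤ M ^ (j + 1) := pow_le_pow_right₀ hM (Nat.le_succ j)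
    calc ‖a ^ (j + 1) - b ^ (j + 1)‖ ≤ ‖a‖ * ‖a ^ j - b ^ j‖ + ‖a - b‖ * ‖b ^ j‖ := by
          rw [h1]; exact (norm_add_le _ _).trans (add_le_add (norm_mul_le _ _) (norm_mul_le _ _))
      _ ≤ M * (j * M ^ j * ‖a - b‖) + ‖a - b‖ * M ^ (j + 1) := by gcongr; exact hbj.trans hMj
      _ = (j + 1 : ℕ) * M ^ (j + 1) * ‖a - b‖ := by push_cast; ring

/-- Two curves through `1` with the same derivative at `0` have asymptotically equal `N`-th powers
at time `1 / N`: the values at `1 / N` differ by `o(1 / N)`, and by `norm_pow_sub_pow_le` taking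
`N`-th powers magnifies the difference by at most a constant multiple of `N`. -/
theorem tendsto_pow_sub_pow {𝔸 : Type*} [NormedRing 𝔸] [NormedAlgebra ℝ 𝔸] [NormOneClass 𝔸]
    {f g : ℝ → 𝔸} {l : 𝔸} (hf0 : f 0 = 1) (hg0 : g 0 = 1)
    (hf : HasDerivAt f l 0) (hg : HasDerivAt g l 0) :
    Tendsto (fun N : ℕ => f ((N : ℝ)⁻¹) ^ N - g ((N : ℝ)⁻¹) ^ N) atTop (𝓝 0) := by
  have hN : Tendsto (fun N : ℕ => (N : ℝ)⁻¹) atTop (𝓝[≠] 0) := by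
    refine tendsto_nhdsWithin_iff.2 ⟨tendsto_inv_atTop_nhds_zero_nat, ?_⟩
    filter_upwards [eventually_gt_atTop 0] with N hN
    have : (N : ℝ) ≠ 0 := by positivity
    simpa using this.symm ∘ Eq.symm
  have hf' := hf.tendsto_slope_zero.comp hN
  have hg' := hg.tendsto_slope_zero.comp hN
  simp only [Function.comp_def, inv_inv, zero_add, hf0, hg0] at hf' hg'
  have hd := hf'.sub hg'
  rw [sub_self] at hd
  have bf := hf'.norm.eventually_le_const (u := ‖l‖ + 1) (by linarith)
  have bg := hg'.norm.eventually_le_const (u := ‖l‖ + 1) (by linarith)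
  have hd0 : Tendsto (fun N : ℕ => Real.exp (‖l‖ + 1) *
      ‖(N : ℝ) • (f (N : ℝ)⁻¹ - 1) - (N : ℝ) • (g (N : ℝ)⁻¹ - 1)‖) atTop (𝓝 0) := by
    simpa using hd.norm.const_mul (Real.exp (‖l‖ + 1))
  refine squeeze_zero_norm' ?_ hd0
  filter_upwards [bf, bg, eventually_gt_atTop 0] with N h1 h2 hN0
  have hNp : (0 : ℝ) < N := by exact_mod_cast hN0
  set K := ‖l‖ + 1 with hK
  have hK0 : 0 ≤ K := by positivity
  have key : ∀ a : 𝔸, ‖(N : ℝ) • (a - 1)‖ ≤ K → ‖a‖ ≤ 1 + K / N := by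
    intro a ha
    rw [norm_smul, Real.norm_of_nonneg hNp.le] at ha
    have : ‖a - 1‖ ≤ K / N := by rw [le_div_iff₀ hNp]; linarith
    calc ‖a‖ = ‖1 + (a - 1)‖ := by simp
      _ ≤ ‖(1 : 𝔸)‖ + ‖a - 1‖ := norm_add_le _ _
      _ ≤ _ := by rw [norm_one]; linarith
  have hM : (1 + K / N) ^ N ≤ Real.exp K := by
    calc (1 + K / N) ^ N ≤ (Real.exp (K / N)) ^ N := by
          gcongr; linarith [Real.add_one_le_exp (K / N)]
      _ = Real.exp K := by rw [← Real.exp_nat_mul]; congr 1; field_simp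
  have := norm_pow_sub_pow_le (M := 1 + K / N) (by have : 0 ≤ K / N := by positivity
                                                   linarith) (key _ h1) (key _ h2) N
  refine this.trans ?_
  rw [← smul_sub, norm_smul, Real.norm_of_nonneg hNp.le]
  have e : f (N : ℝ)⁻¹ - 1 - (g (N : ℝ)⁻¹ - 1) = f (N : ℝ)⁻¹ - g (N : ℝ)⁻¹ := by abel
  rw [e]
  calc _ ≤ N * Real.exp K * ‖f (N : ℝ)⁻¹ - g (N : ℝ)⁻¹‖ := by gcongr
    _ = _ := by ring

/-- Lie product formula: both `exp (tA) * exp (tB)` and `exp (t (A + B))` have derivative `A + B` at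
`t = 0`. -/
theorem tendsto_lie_product {𝔸 : Type*} [NormedRing 𝔸] [NormedAlgebra ℝ 𝔸] [NormOneClass 𝔸]
    [CompleteSpace 𝔸] (A B : 𝔸) :
    Tendsto (fun N : ℕ => (NormedSpace.exp ((N : ℝ)⁻¹ • A) * NormedSpace.exp ((N : ℝ)⁻¹ • B)) ^ N)
      atTop (𝓝 (NormedSpace.exp (A + B))) := by
  let _ : NormedAlgebra ℚ 𝔸 := NormedAlgebra.restrictScalars ℚ ℝ 𝔸
  have hA := hasDerivAt_exp_smul_const (𝕂 := ℝ) A 0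
  have hB := hasDerivAt_exp_smul_const (𝕂 := ℝ) B 0
  have hAB := hasDerivAt_exp_smul_const (𝕂 := ℝ) (A + B) 0
  have hm := hA.mul hB
  simp only [zero_smul, NormedSpace.exp_zero, one_mul, mul_one] at hm hAB
  have h := tendsto_pow_sub_pow (by simp) (by simp) hm hAB
  have h2 := h.add_const (NormedSpace.exp (A + B))
  rw [zero_add] at h2
  refine h2.congr' ?_
  filter_upwards [eventually_gt_atTop 0] with N hN0
  have hNp : (N : ℝ) ≠ 0 := by positivity
  have : NormedSpace.exp ((N : ℝ)⁻¹ • (A + B)) ^ N = NormedSpace.exp (A + B) := by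
    rw [← NormedSpace.exp_nsmul, ← Nat.cast_smul_eq_nsmul ℝ, smul_smul, mul_inv_cancel₀ hNp, one_smul]
  change (NormedSpace.exp ((N : ℝ)⁻¹ • A) * NormedSpace.exp ((N : ℝ)⁻¹ • B)) ^ N -
    NormedSpace.exp ((N : ℝ)⁻¹ • (A + B)) ^ N + _ = _
  rw [this, sub_add_cancel]

variable {m : Type*} [Fintype m] [DecidableEq m]

omit [DecidableEq m] in
theorem trace_mul_self_le (M : Matrix m m ℝ) : (M * M).trace ≤ (Mᵀ * M).trace := by
  simp only [trace, diag_apply, mul_apply, transpose_apply]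
  have : ∑ i, ∑ j, M j i * M j i = ∑ i, ∑ j, (M i j ^ 2 + M j i ^ 2) / 2 := by
    have h : ∑ i, ∑ j, M i j ^ 2 = ∑ i, ∑ j, M j i ^ 2 := Finset.sum_comm
    simp only [add_div, Finset.sum_add_distrib, ← Finset.sum_div, ← pow_two]
    rw [h]; ring
  rw [this]
  gcongr with i _ j _
  nlinarith [sq_nonneg (M i j - M j i)]

theorem trace_pow_mul_comm (A B : Matrix m m ℝ) (k : ℕ) :
    ((A * B) ^ k).trace = ((B * A) ^ k).trace := by
  cases k with
  | zero => simp
  | succ k =>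
    have : (A * B) ^ (k + 1) = A * ((B * A) ^ k * B) := by
      induction k with
      | zero => simp
      | succ k ih => rw [pow_succ', ih, pow_succ' (B * A)]; simp only [mul_assoc]
    rw [this, trace_mul_comm, mul_assoc, ← pow_succ]

/-- Two trace inequalities proved by a joint induction on `k`:
`tr M^(2^(k+1)) ≤ tr (Mᵀ M)^(2^k)` for all `M`, and `tr (P Q)^(2^k) ≤ tr (P^(2^k) Q^(2^k))` for
symmetric `P`, `Q`. In the inductive step the first, applied to `M * M` or `P * Q`, reduces by
cyclicity of the trace to the second, applied to `Mᵀ M, M Mᵀ` or `P², Q²`. -/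
theorem trace_pow_two_pow (k : ℕ) :
    (∀ M : Matrix m m ℝ, (M ^ (2 ^ (k + 1))).trace ≤ ((Mᵀ * M) ^ (2 ^ k)).trace) ∧
    (∀ P Q : Matrix m m ℝ, Pᵀ = P → Qᵀ = Q →
      ((P * Q) ^ (2 ^ k)).trace ≤ (P ^ (2 ^ k) * Q ^ (2 ^ k)).trace) := by
  induction k with
  | zero =>
    refine ⟨fun M => ?_, fun P Q _ _ => by simp⟩
    simpa [pow_two] using trace_mul_self_le M
  | succ k ih =>
    obtain ⟨hT, hG⟩ := ih
    refine ⟨fun M => ?_, fun P Q hP hQ => ?_⟩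
    · have e1 : M ^ (2 ^ (k + 1 + 1)) = (M * M) ^ (2 ^ (k + 1)) := by
        rw [← pow_two, ← pow_mul, pow_succ' 2 (k + 1)]
      have e2 : (((M * M)ᵀ * (M * M)) ^ 2 ^ k).trace = ((Mᵀ * M * (M * Mᵀ)) ^ 2 ^ k).trace := by
        rw [transpose_mul, show Mᵀ * Mᵀ * (M * M) = Mᵀ * (Mᵀ * M * M) by noncomm_ring,
          trace_pow_mul_comm]
        congr 2; noncomm_ring
      have s1 : (Mᵀ * M)ᵀ = Mᵀ * M := by simp [transpose_mul]
      have s2 : (M * Mᵀ)ᵀ = M * Mᵀ := by simp [transpose_mul]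
      rw [e1]
      refine (hT (M * M)).trans ?_
      rw [e2]
      refine (hG _ _ s1 s2).trans ?_
      set X := (Mᵀ * M) ^ 2 ^ k with hX
      set Y := (M * Mᵀ) ^ 2 ^ k with hY
      have hXt : Xᵀ = X := by rw [hX, transpose_pow, s1]
      have hYt : Yᵀ = Y := by rw [hY, transpose_pow, s2]
      have e3 : (Y * Y).trace = (X * X).trace := by
        rw [hX, hY, ← pow_add, ← pow_add, trace_pow_mul_comm]
      have e4 : (Mᵀ * M) ^ 2 ^ (k + 1) = X * X := by
        rw [hX, ← pow_add]; congr 1; ring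
      have pos : 0 ≤ ((X - Y)ᵀ * (X - Y)).trace := by
        simp only [trace, diag_apply, mul_apply, transpose_apply]
        exact Finset.sum_nonneg fun i _ => Finset.sum_nonneg fun j _ => mul_self_nonneg _
      rw [transpose_sub, hXt, hYt, sub_mul, mul_sub, mul_sub] at pos
      simp only [trace_sub] at pos
      rw [e4]
      have := trace_mul_comm X Y
      linarith
    · refine (hT (P * Q)).trans ?_
      have e2 : (((P * Q)ᵀ * (P * Q)) ^ 2 ^ k).trace = ((P * P * (Q * Q)) ^ 2 ^ k).trace := by
        rw [transpose_mul, hP, hQ, show Q * P * (P * Q) = Q * (P * P * Q) by noncomm_ring,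
          trace_pow_mul_comm]
        congr 2; noncomm_ring
      rw [e2]
      refine (hG _ _ (by simp [hP]) (by simp [hQ])).trans (le_of_eq ?_)
      rw [← pow_two, ← pow_two, ← pow_mul, ← pow_mul, ← pow_succ']

theorem tendsto_lie_product_matrix [Nonempty m] (A B : Matrix m m ℝ) :
    Tendsto (fun N : ℕ => (NormedSpace.exp ((N : ℝ)⁻¹ • A) * NormedSpace.exp ((N : ℝ)⁻¹ • B)) ^ N)
      atTop (𝓝 (NormedSpace.exp (A + B))) := by
  open scoped Matrix.Norms.Operator in
  exact tendsto_lie_product A B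

/-- The Golden–Thompson inequality, obtained from the second inequality of `trace_pow_two_pow` for
`exp (A / 2^k)` and `exp (B / 2^k)` by letting `k → ∞` in the Lie product formula. -/
theorem golden_thompson (A B : Matrix m m ℝ) (hA : Aᵀ = A) (hB : Bᵀ = B) :
    (NormedSpace.exp (A + B)).trace ≤ (NormedSpace.exp A * NormedSpace.exp B).trace := by
  cases isEmpty_or_nonempty m with
  | inl h => simp [trace]
  | inr h =>
  have hlim := (tendsto_lie_product_matrix A B).comp (tendsto_pow_atTop_atTop_of_one_lt (r := 2) (by norm_num))
  have hc : Continuous (fun M : Matrix m m ℝ => M.trace) := continuous_id.matrix_trace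
  have hlim2 := (hc.tendsto _).comp hlim
  refine le_of_tendsto' hlim2 fun k => ?_
  simp only [Function.comp_def]
  set c : ℝ := (((2 ^ k : ℕ)) : ℝ)⁻¹ with hcdef
  refine ((trace_pow_two_pow k).2 _ _ ?_ ?_).trans (le_of_eq ?_)
  · rw [← Matrix.exp_transpose, transpose_smul, hA]
  · rw [← Matrix.exp_transpose, transpose_smul, hB]
  · have : ∀ Z : Matrix m m ℝ, NormedSpace.exp (c • Z) ^ (2 ^ k) = NormedSpace.exp Z := by
      intro Z
      rw [← Matrix.exp_nsmul, ← Nat.cast_smul_eq_nsmul ℝ, smul_smul, mul_inv_cancel₀ (by positivity),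
        one_smul]
    rw [this, this]

/-! ### Spectral calculus of real symmetric matrices -/

theorem exp_eq_conj_diagonal {A : Matrix m m ℝ} (hA : A.IsHermitian) :
    ∃ U : Matrix m m ℝ, U * Uᴴ = 1 ∧ Uᴴ * U = 1 ∧ A = U * diagonal hA.eigenvalues * Uᴴ ∧
      NormedSpace.exp A = U * diagonal (fun i => Real.exp (hA.eigenvalues i)) * Uᴴ := by
  have h1 : (hA.eigenvectorUnitary : Matrix m m ℝ) * (hA.eigenvectorUnitary : Matrix m m ℝ)ᴴ = 1 :=
    Unitary.mul_star_self_of_mem hA.eigenvectorUnitary.2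
  have h2 : (hA.eigenvectorUnitary : Matrix m m ℝ)ᴴ * (hA.eigenvectorUnitary : Matrix m m ℝ) = 1 :=
    Unitary.star_mul_self_of_mem hA.eigenvectorUnitary.2
  have h3 : A = (hA.eigenvectorUnitary : Matrix m m ℝ) * diagonal hA.eigenvalues *
      (hA.eigenvectorUnitary : Matrix m m ℝ)ᴴ := by
    have := hA.spectral_theorem
    rw [Unitary.conjStarAlgAut_apply] at this
    exact this
  refine ⟨_, h1, h2, h3, ?_⟩
  have hinv : (hA.eigenvectorUnitary : Matrix m m ℝ)⁻¹ = (hA.eigenvectorUnitary : Matrix m m ℝ)ᴴ :=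
    inv_eq_right_inv h1
  have hu : IsUnit (hA.eigenvectorUnitary : Matrix m m ℝ) :=
    IsUnit.of_mul_eq_one _ h1
  conv_lhs => rw [h3, ← hinv]
  rw [Matrix.exp_conj _ _ hu, Matrix.exp_diagonal, hinv]
  congr 3
  funext i
  rw [Pi.coe_exp, Real.exp_eq_exp_ℝ]

/-- Scalar inequalities on the spectrum of `A` between `exp`, `1`, `A` and `A²` transfer to the
Loewner order. -/
theorem posSemidef_exp_comb {A : Matrix m m ℝ} (hA : A.IsHermitian) (a b c e : ℝ)
    (h : ∀ i, 0 ≤ a * Real.exp (hA.eigenvalues i) + b + c * hA.eigenvalues i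
      + e * hA.eigenvalues i ^ 2) :
    (a • NormedSpace.exp A + b • (1 : Matrix m m ℝ) + c • A + e • (A * A)).PosSemidef := by
  obtain ⟨U, h1, h2, h3, h4⟩ := exp_eq_conj_diagonal hA
  have h5 : A * A = U * diagonal (fun i => hA.eigenvalues i ^ 2) * Uᴴ := by
    conv_lhs => rw [h3]
    calc _ = U * diagonal hA.eigenvalues * (Uᴴ * U) * diagonal hA.eigenvalues * Uᴴ := by
          simp only [mul_assoc]
      _ = _ := by rw [h2, mul_one, mul_assoc U, diagonal_mul_diagonal]; simp only [pow_two]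
  have h6 : (1 : Matrix m m ℝ) = U * diagonal (fun _ => (1 : ℝ)) * Uᴴ := by
    rw [diagonal_one, mul_one, h1]
  have key : a • NormedSpace.exp A + b • (1 : Matrix m m ℝ) + c • A + e • (A * A) =
      U * diagonal (fun i => a * Real.exp (hA.eigenvalues i) + b + c * hA.eigenvalues i
      + e * hA.eigenvalues i ^ 2) * Uᴴ := by
    have hd : diagonal (fun i => a * Real.exp (hA.eigenvalues i) + b + c * hA.eigenvalues i
      + e * hA.eigenvalues i ^ 2) = a • diagonal (fun i => Real.exp (hA.eigenvalues i)) +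
        b • diagonal (fun _ => (1 : ℝ)) + c • diagonal hA.eigenvalues +
        e • diagonal (fun i => hA.eigenvalues i ^ 2) := by
      ext i j
      by_cases hij : i = j
      · subst hij; simp
      · simp [hij]
    have h6' := congrArg (b • ·) h6
    have h3' := congrArg (c • ·) h3
    rw [hd, h4, h5, h6', h3']
    simp only [mul_add, add_mul, mul_smul_comm, smul_mul_assoc]
  rw [key]
  exact (PosSemidef.diagonal (fun i => h i)).mul_mul_conjTranspose_same U

theorem trace_exp_eq_sum {A : Matrix m m ℝ} (hA : A.IsHermitian) :
    (NormedSpace.exp A).trace = ∑ i, Real.exp (hA.eigenvalues i) := by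
  obtain ⟨U, h1, h2, h3, h4⟩ := exp_eq_conj_diagonal hA
  rw [h4, mul_assoc, trace_mul_comm, mul_assoc, h2, mul_one, trace_diagonal]

theorem trace_exp_neg_eq_sum {A : Matrix m m ℝ} (hA : A.IsHermitian) :
    (NormedSpace.exp (-A)).trace = ∑ i, Real.exp (-hA.eigenvalues i) := by
  obtain ⟨U, h1, h2, h3, h4⟩ := exp_eq_conj_diagonal hA
  have hu : IsUnit U := IsUnit.of_mul_eq_one _ h1
  have hinv : U⁻¹ = Uᴴ := inv_eq_right_inv h1
  have : -A = U * diagonal (fun i => -hA.eigenvalues i) * U⁻¹ := by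
    conv_lhs => rw [h3]
    rw [hinv, ← diagonal_neg, mul_neg, neg_mul]
  rw [this, Matrix.exp_conj _ _ hu, Matrix.exp_diagonal, hinv, mul_assoc, trace_mul_comm, mul_assoc,
    h2, mul_one, trace_diagonal]
  congr 1; funext i
  rw [Pi.coe_exp, Real.exp_eq_exp_ℝ]

theorem trace_mul_nonneg {P Q : Matrix m m ℝ} (hP : P.PosSemidef) (hQ : Q.PosSemidef) :
    0 ≤ (P * Q).trace := by
  obtain ⟨B, rfl⟩ : ∃ B : Matrix m m ℝ, Q = Bᴴ * B := by
    open scoped MatrixOrder in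
    exact CStarAlgebra.nonneg_iff_eq_star_mul_self.1 hQ.nonneg
  rw [← mul_assoc, trace_mul_comm, ← mul_assoc]
  exact (hP.mul_mul_conjTranspose_same B).trace_nonneg

theorem abs_eigenvalues_le {A : Matrix m m ℝ} (hA : A.IsHermitian) {u : ℝ}
    (h : ∀ w : m → ℝ, |w ⬝ᵥ A *ᵥ w| ≤ u * (w ⬝ᵥ w)) (i : m) : |hA.eigenvalues i| ≤ u := by
  have h1 := hA.eigenvalues_eq i
  simp only [star_trivial, RCLike.re_to_real] at h1
  have h2 : (hA.eigenvectorBasis i : m → ℝ) ⬝ᵥ (hA.eigenvectorBasis i : m → ℝ) = 1 := by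
    have := hA.eigenvectorBasis.orthonormal.1 i
    rw [EuclideanSpace.norm_eq, Real.sqrt_eq_one] at this
    rw [← this]
    simp [dotProduct, pow_two]
  have := h (hA.eigenvectorBasis i)
  rwa [← h1, h2, mul_one] at this

theorem abs_quadForm_le {A : Matrix m m ℝ} (hA : A.IsHermitian) {a : ℝ}
    (h : ∀ i, |hA.eigenvalues i| ≤ a) (w : m → ℝ) : |w ⬝ᵥ A *ᵥ w| ≤ a * (w ⬝ᵥ w) := by
  have hp := posSemidef_exp_comb hA 0 a 1 0 (fun i => by
    have := neg_le_of_abs_le (h i); linarith)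
  have hm := posSemidef_exp_comb hA 0 a (-1) 0 (fun i => by
    have := le_of_abs_le (h i); linarith)
  have hp' := hp.dotProduct_mulVec_nonneg w
  have hm' := hm.dotProduct_mulVec_nonneg w
  simp [add_mulVec, smul_mulVec, neg_mulVec] at hp' hm'
  rw [abs_le]; constructor <;> linarith

/-- The remainder bound behind Bernstein's inequality: since `(j + 2)! ≥ 2 * 3 ^ j`, the tail of the
exponential series is dominated by a geometric series of ratio `|z| / 3`. -/
theorem exp_le_quadratic {z u : ℝ} (hz : |z| ≤ u) (hu : u < 3) :
    Real.exp z ≤ 1 + z + (1 / 2 / (1 - u / 3)) * z ^ 2 := by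
  have hz0 := abs_nonneg z
  have h := NormedSpace.expSeries_div_hasSum_exp (𝔸 := ℝ) z
  rw [← Real.exp_eq_exp_ℝ] at h
  have h2 := (hasSum_nat_add_iff' 2).2 h
  have hg := (hasSum_geometric_of_lt_one (r := |z| / 3) (by positivity) (by linarith)).mul_left
    (z ^ 2 / 2)
  have hle := hasSum_le (fun j => ?_) h2 hg
  · simp [Finset.sum_range_succ] at hle
    have hm : z ^ 2 / 2 * (1 - |z| / 3)⁻¹ ≤ (1 / 2 / (1 - u / 3)) * z ^ 2 := by
      have : (1 - |z| / 3)⁻¹ ≤ (1 - u / 3)⁻¹ := by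
        apply inv_anti₀ <;> linarith
      calc _ ≤ z ^ 2 / 2 * (1 - u / 3)⁻¹ := by gcongr
        _ = _ := by rw [div_eq_mul_inv (1 / 2 : ℝ)]; ring
    linarith
  · have hfac : (2 * 3 ^ j : ℝ) ≤ (j + 2).factorial := by
      induction j with
      | zero => simp
      | succ j ih =>
        rw [show j + 1 + 2 = (j + 2) + 1 by ring, Nat.factorial_succ, pow_succ]
        push_cast
        have : (0 : ℝ) ≤ j := by positivity
        have : (0 : ℝ) < 3 ^ j := by positivity
        nlinarith
    calc z ^ (j + 2) / (j + 2).factorial ≤ |z| ^ (j + 2) / (j + 2).factorial := by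
          gcongr ?_ / _; rw [← abs_pow]; exact le_abs_self _
      _ ≤ |z| ^ (j + 2) / (2 * 3 ^ j) := by gcongr
      _ = z ^ 2 / 2 * (|z| / 3) ^ j := by
          rw [pow_add, sq_abs, div_pow]; field_simp

/-! ### Matrix Bernstein inequality with intrinsic dimension -/

section Probability

variable {Ω : Type*} [MeasurableSpace Ω]

theorem continuous_trace_exp (M : Matrix m m ℝ) :
    Continuous (fun S : Matrix m m ℝ => (NormedSpace.exp (M + S)).trace) := by
  have : Continuous (fun S : Matrix m m ℝ => NormedSpace.exp S) := by
    open scoped Matrix.Norms.Operator in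
    let _ : NormedAlgebra ℚ (Matrix m m ℝ) := NormedAlgebra.restrictScalars ℚ ℝ _
    exact NormedSpace.exp_continuous
  exact (this.comp (continuous_const.add continuous_id)).matrix_trace

omit [DecidableEq m] in
theorem integrable_comp_of_bounded {ν : Measure Ω} [IsFiniteMeasure ν] {f : Matrix m m ℝ → ℝ}
    (hf : Continuous f) {W : Ω → Matrix m m ℝ} (hW : ∀ i j, Measurable fun a => W a i j) {B : ℝ}
    (hB : ∀ a i j, |W a i j| ≤ B) : Integrable (fun a => f (W a)) ν := by
  let f' : (m → m → ℝ) → ℝ := f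
  have hf' : Continuous f' := hf
  let W' : Ω → m → m → ℝ := W
  have hW' : Measurable W' := measurable_pi_lambda _ fun i => measurable_pi_lambda _ fun j => hW i j
  have hK : IsCompact (Set.pi Set.univ fun _ : m => Set.pi Set.univ fun _ : m => Set.Icc (-B) B) :=
    isCompact_univ_pi fun _ => isCompact_univ_pi fun _ => isCompact_Icc
  obtain ⟨c, hc⟩ := hK.exists_bound_of_continuousOn hf'.continuousOn
  refine Integrable.of_bound (C := c) (hf'.measurable.comp hW').aestronglyMeasurable ?_
  refine Filter.Eventually.of_forall fun a => hc (W' a) ?_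
  intro i _ j _
  exact abs_le.1 (hB a i j)

omit [DecidableEq m] in
theorem integral_trace_mul {ν : Measure Ω} {W : Ω → Matrix m m ℝ}
    (hW : ∀ i j, Integrable (fun a => W a i j) ν) (M : Matrix m m ℝ) :
    Integrable (fun a => (M * W a).trace) ν ∧
      ∫ a, (M * W a).trace ∂ν = (M * Matrix.of fun i j => ∫ a, W a i j ∂ν).trace := by
  have e : ∀ a, (M * W a).trace = ∑ i, ∑ j, M i j * W a j i := fun a => by
    simp only [trace, diag_apply, mul_apply]
  have hi : ∀ i, Integrable (fun a => ∑ j, M i j * W a j i) ν := fun i =>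
    integrable_finsetSum _ fun j _ => (hW j i).const_mul _
  simp_rw [e]
  refine ⟨integrable_finsetSum _ fun i _ => hi i, ?_⟩
  rw [integral_finsetSum _ fun i _ => hi i]
  simp only [trace, diag_apply, mul_apply, of_apply]
  refine Finset.sum_congr rfl fun i _ => ?_
  rw [integral_finsetSum _ fun j _ => (hW j i).const_mul _]
  exact Finset.sum_congr rfl fun j _ => integral_const_mul _ _

theorem integral_affine {ν : Measure Ω} [IsProbabilityMeasure ν] {f g h : Ω → ℝ}
    (hf : Integrable f ν) (hg : Integrable g ν) (hh : Integrable h ν) (c α β γ : ℝ) :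
    ∫ x, (c + α * f x + β * g x + γ * h x) ∂ν =
      c + α * ∫ x, f x ∂ν + β * ∫ x, g x ∂ν + γ * ∫ x, h x ∂ν := by
  have i0 : Integrable (fun _ : Ω => c) ν := integrable_const c
  have i1 : Integrable (fun x => c + α * f x) ν := i0.add (hf.const_mul α)
  have i2 : Integrable (fun x => c + α * f x + β * g x) ν := i1.add (hg.const_mul β)
  rw [integral_add i2 (hh.const_mul γ), integral_add i1 (hg.const_mul β),
    integral_add i0 (hf.const_mul α)]
  simp [integral_const_mul]

/-- Hypotheses on a single centred random symmetric matrix `Z`, with a matrix `V` dominating its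
second moment `E[Z²]`; `u`, `v`, `τ` bound the norm of `Z`, the norm of `V` and the trace of `V`.
The norm bounds are stated through quadratic forms and the Loewner order, and `second` expresses
`E[Z²] ≤ V` by testing against positive semidefinite `E`. The entrywise bound `B` serves only to
guarantee integrability and enters no estimate. -/
structure BernsteinData (μ : Measure Ω) (Z : Ω → Matrix m m ℝ) (V : Matrix m m ℝ)
    (u v τ B : ℝ) : Prop where
  meas : ∀ i j, Measurable fun x => Z x i j
  bdd : ∀ x i j, |Z x i j| ≤ B
  herm : ∀ x, (Z x).IsHermitian
  mean : ∀ i j, ∫ x, Z x i j ∂μ = 0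
  quad : ∀ x (w : m → ℝ), |w ⬝ᵥ Z x *ᵥ w| ≤ u * (w ⬝ᵥ w)
  u_lt : u < 3
  V_psd : V.PosSemidef
  V_le : (v • (1 : Matrix m m ℝ) - V).PosSemidef
  V_tr : V.trace ≤ τ
  second : ∀ E : Matrix m m ℝ, E.PosSemidef → ∫ x, (E * (Z x * Z x)).trace ∂μ ≤ (E * V).trace

variable {μ : Measure Ω} [IsProbabilityMeasure μ] {Z : Ω → Matrix m m ℝ} {V : Matrix m m ℝ}
  {u v τ B : ℝ}

theorem posSemidef_exp {S : Matrix m m ℝ} (hS : S.IsHermitian) : (NormedSpace.exp S).PosSemidef := by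
  simpa using posSemidef_exp_comb hS 1 0 0 0 (fun i => by
    have := Real.exp_pos (hS.eigenvalues i); linarith)

/-- The effect of adding one independent summand to a fixed symmetric `S`. Golden–Thompson and
`exp z ≤ 1 + z + κ z²` bound the left side by `tr e^S + κ tr (V e^S)`. As `e^S - 1 - S ≥ 0` and
`V ≤ v`, one has `tr (V e^S) ≤ tr V + tr (V S) + v tr (e^S - 1 - S)`, where the dimension is
subtracted off again and `tr (V S)`, `tr S` have mean zero once `S` is itself a centred sum. -/
theorem one_step (h : BernsteinData μ Z V u v τ B) {κ : ℝ} (hκ : κ = 1 / 2 / (1 - u / 3))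
    {S : Matrix m m ℝ} (hS : S.IsHermitian) :
    ∫ x, (NormedSpace.exp (S + Z x)).trace ∂μ ≤ (NormedSpace.exp S).trace +
      κ * (V.trace + (V * S).trace + v * ((NormedSpace.exp S).trace - Fintype.card m - S.trace)) := by
  have hκ0 : 0 ≤ κ := by
    have := h.u_lt
    rw [hκ]; apply div_nonneg (by norm_num); linarith
  set E := NormedSpace.exp S with hE
  have hEp : E.PosSemidef := posSemidef_exp hS
  have pt : ∀ x, (NormedSpace.exp (S + Z x)).trace ≤
      E.trace + (E * Z x).trace + κ * (E * (Z x * Z x)).trace := by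
    intro x
    have hZ := h.herm x
    refine (golden_thompson S (Z x) ?_ ?_).trans ?_
    · rw [← conjTranspose_eq_transpose_of_trivial]; exact hS
    · rw [← conjTranspose_eq_transpose_of_trivial]; exact hZ
    have := trace_mul_nonneg hEp (posSemidef_exp_comb hZ (-1) 1 1 κ (fun i => by
      have := exp_le_quadratic (abs_eigenvalues_le hZ (h.quad x) i) h.u_lt
      rw [← hκ] at this
      linarith))
    simp only [mul_add, trace_add, mul_smul_comm, trace_smul, mul_one, smul_eq_mul] at this
    linarith
  have hZi : ∀ i j, Integrable (fun x => Z x i j) μ := fun i j =>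
    Integrable.of_bound (C := B) (h.meas i j).aestronglyMeasurable
      (Filter.Eventually.of_forall fun x => h.bdd x i j)
  have i1 : Integrable (fun x => (NormedSpace.exp (S + Z x)).trace) μ :=
    integrable_comp_of_bounded (continuous_trace_exp S) h.meas h.bdd
  obtain ⟨i2, e2⟩ := integral_trace_mul hZi E
  have i3 : Integrable (fun x => (E * (Z x * Z x)).trace) μ :=
    integrable_comp_of_bounded (f := fun W => (E * (W * W)).trace)
      ((continuous_const.matrix_mul (continuous_id.matrix_mul continuous_id)).matrix_trace)
      h.meas h.bdd
  have e2' : ∫ x, (E * Z x).trace ∂μ = 0 := by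
    rw [e2]
    have : (Matrix.of fun i j => ∫ a, Z a i j ∂μ) = (0 : Matrix m m ℝ) := by
      ext i j; simp [h.mean]
    rw [this]; simp
  -- The linear term has mean zero and the quadratic term is controlled by `V`.
  have hint : ∫ x, (NormedSpace.exp (S + Z x)).trace ∂μ ≤ E.trace + κ * (E * V).trace := by
    calc _ ≤ ∫ x, (E.trace + (E * Z x).trace + κ * (E * (Z x * Z x)).trace) ∂μ :=
          integral_mono i1 (((integrable_const _).add i2).add (i3.const_mul κ)) pt
      _ = E.trace + κ * ∫ x, (E * (Z x * Z x)).trace ∂μ := by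
          have := integral_affine i2 i3 i3 E.trace 1 κ 0
          simpa [e2'] using this
      _ ≤ _ := by gcongr; exact h.second E hEp
  refine hint.trans ?_
  gcongr
  have hq := trace_mul_nonneg h.V_le (posSemidef_exp_comb hS 1 (-1) (-1) 0 (fun i => by
    have := Real.add_one_le_exp (hS.eigenvalues i); linarith))
  simp only [mul_add, trace_add, mul_smul_comm, trace_smul, mul_one, smul_eq_mul, sub_mul,
    trace_sub, smul_mul_assoc, one_mul, trace_one, ← hE] at hq
  rw [trace_mul_comm E V]
  linarith

omit [IsProbabilityMeasure μ] in
theorem sum_bdd (h : BernsteinData μ Z V u v τ B) (n : ℕ) (x : Fin n → Ω) (i j : m) :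
    |(∑ k, Z (x k)) i j| ≤ n * B := by
  rw [Matrix.sum_apply]
  calc _ ≤ ∑ k, |Z (x k) i j| := Finset.abs_sum_le_sum_abs _ _
    _ ≤ ∑ _k : Fin n, B := Finset.sum_le_sum fun k _ => h.bdd _ _ _
    _ = _ := by simp

omit [IsProbabilityMeasure μ] in
theorem sum_meas (h : BernsteinData μ Z V u v τ B) (n : ℕ) (i j : m) :
    Measurable fun x : Fin n → Ω => (∑ k, Z (x k)) i j := by
  simp only [Matrix.sum_apply]
  exact Finset.measurable_sum _ fun k _ => (h.meas i j).comp (measurable_pi_apply k)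

omit [IsProbabilityMeasure μ] in
theorem sum_herm (h : BernsteinData μ Z V u v τ B) (n : ℕ) (x : Fin n → Ω) :
    (∑ k, Z (x k)).IsHermitian := by
  rw [IsHermitian, conjTranspose_sum]
  exact Finset.sum_congr rfl fun k _ => h.herm _

theorem sum_mean (h : BernsteinData μ Z V u v τ B) (n : ℕ) (i j : m) :
    ∫ x : Fin n → Ω, (∑ k, Z (x k)) i j ∂(Measure.pi fun _ => μ) = 0 := by
  simp only [Matrix.sum_apply]
  have hZi : Integrable (fun x => Z x i j) μ :=
    Integrable.of_bound (C := B) (h.meas i j).aestronglyMeasurable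
      (Filter.Eventually.of_forall fun x => h.bdd x i j)
  rw [integral_finsetSum]
  · refine Finset.sum_eq_zero fun k _ => ?_
    have := integral_comp_eval (μ := fun _ : Fin n => μ) (i := k) (f := fun x => Z x i j)
      hZi.aestronglyMeasurable
    rw [this, h.mean]
  · intro k _
    exact integrable_comp_eval (μ := fun _ : Fin n => μ) (i := k) hZi

/-- Trace moment generating function bound with intrinsic dimension. With
`J n = E tr (exp (Z₁ + ⋯ + Zₙ) - 1)`, averaging `one_step` gives
`J (n + 1) ≤ J n + κ (τ + v J n)`, and the recursion solves to the stated bound. It is kept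
multiplied by `v`, which avoids a division. -/
theorem mgf_bound (h : BernsteinData μ Z V u v τ B) {κ : ℝ} (hκ : κ = 1 / 2 / (1 - u / 3))
    (hv : 0 ≤ v) (n : ℕ) :
    v * (∫ x : Fin n → Ω, (NormedSpace.exp (∑ k, Z (x k))).trace ∂(Measure.pi fun _ => μ)
      - Fintype.card m) ≤ τ * ((1 + κ * v) ^ n - 1) := by
  have hκ0 : 0 ≤ κ := by
    have := h.u_lt
    rw [hκ]; apply div_nonneg (by norm_num); linarith
  induction n with
  | zero => simp
  | succ n ih =>
    set I := ∫ x : Fin n → Ω, (NormedSpace.exp (∑ k, Z (x k))).trace ∂(Measure.pi fun _ => μ)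
      with hI
    have hZi : ∀ i j, Integrable (fun x : Fin n → Ω => (∑ k, Z (x k)) i j) (Measure.pi fun _ => μ) :=
      fun i j => Integrable.of_bound (C := n * B) (sum_meas h n i j).aestronglyMeasurable
        (Filter.Eventually.of_forall fun x => sum_bdd h n x i j)
    have z0 : (Matrix.of fun i j => ∫ x : Fin n → Ω, (∑ k, Z (x k)) i j ∂(Measure.pi fun _ => μ))
        = (0 : Matrix m m ℝ) := by ext i j; simp [sum_mean h]
    have iE : Integrable (fun x : Fin n → Ω => (NormedSpace.exp (∑ k, Z (x k))).trace)
        (Measure.pi fun _ => μ) := by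
      simpa using integrable_comp_of_bounded (continuous_trace_exp (0 : Matrix m m ℝ))
        (sum_meas h n) (sum_bdd h n)
    obtain ⟨iV, eV⟩ := integral_trace_mul hZi V
    obtain ⟨i1, e1⟩ := integral_trace_mul hZi 1
    rw [z0] at eV e1
    simp only [one_mul, mul_zero, trace_zero] at eV e1 i1
    -- Fubini: integrate out the first sample with the remaining `n` held fixed.
    have key : ∫ x : Fin (n + 1) → Ω, (NormedSpace.exp (∑ k, Z (x k))).trace
          ∂(Measure.pi fun _ => μ) =
        ∫ y : Fin n → Ω, ∫ x, (NormedSpace.exp ((∑ k, Z (y k)) + Z x)).trace ∂μ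
          ∂(Measure.pi fun _ => μ) := by
      have hmp := (measurePreserving_piFinSuccAbove (fun _ : Fin (n + 1) => μ) 0).symm
      rw [← hmp.integral_comp']
      simp_rw [MeasurableEquiv.piFinSuccAbove_symm_apply, Fin.insertNthEquiv, Fin.sum_univ_succ,
        Fin.insertNth_zero]
      simp only [Equiv.coe_fn_mk, Fin.cons_zero, Fin.cons_succ, cast_eq]
      rw [integral_prod_symm]
      · simp only [add_comm]
      · have := integrable_comp_of_bounded (ν := μ.prod (Measure.pi fun _ : Fin n => μ))
          (f := fun S : Matrix m m ℝ => (NormedSpace.exp (0 + S)).trace)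
          (continuous_trace_exp (0 : Matrix m m ℝ))
          (W := fun p : Ω × (Fin n → Ω) => Z p.1 + ∑ k, Z (p.2 k)) (B := B + n * B)
          (fun i j => ((h.meas i j).comp measurable_fst).add
            ((sum_meas h n i j).comp measurable_snd))
          (fun p i j => (abs_add_le _ _).trans (add_le_add (h.bdd _ _ _) (sum_bdd h n _ _ _)))
        simpa using this
    rw [key]
    have iR : Integrable (fun y : Fin n → Ω => (NormedSpace.exp (∑ k, Z (y k))).trace +
      κ * (V.trace + (V * ∑ k, Z (y k)).trace +
        v * ((NormedSpace.exp (∑ k, Z (y k))).trace - Fintype.card m - (∑ k, Z (y k)).trace)))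
        (Measure.pi fun _ => μ) :=
      iE.add ((((integrable_const _).add iV).add
        (((iE.sub (integrable_const _)).sub i1).const_mul v)).const_mul κ)
    have hmono : ∫ y : Fin n → Ω, ∫ x, (NormedSpace.exp ((∑ k, Z (y k)) + Z x)).trace ∂μ
          ∂(Measure.pi fun _ => μ) ≤ I + κ * (V.trace + v * (I - Fintype.card m)) := by
      calc _ ≤ ∫ y : Fin n → Ω, ((NormedSpace.exp (∑ k, Z (y k))).trace +
              κ * (V.trace + (V * ∑ k, Z (y k)).trace + v * ((NormedSpace.exp (∑ k, Z (y k))).trace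
                - Fintype.card m - (∑ k, Z (y k)).trace))) ∂(Measure.pi fun _ => μ) := by
            refine integral_mono_of_nonneg (Filter.Eventually.of_forall fun y => ?_) iR
              (Filter.Eventually.of_forall fun y => one_step h hκ (sum_herm h n y))
            exact integral_nonneg fun x => (posSemidef_exp ((sum_herm h n y).add (h.herm x))).trace_nonneg
        _ = _ := by
            have := integral_affine iE iV i1 (κ * (V.trace - v * Fintype.card m)) (1 + κ * v) κ
              (-(κ * v))
            rw [eV, e1, ← hI] at this
            refine Eq.trans (integral_congr_ae (Filter.Eventually.of_forall fun y => ?_))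
              (this.trans ?_)
            · ring
            · ring
    have hτ := h.V_tr
    have hpow : (1 + κ * v) ^ (n + 1) = (1 + κ * v) * (1 + κ * v) ^ n := by ring
    rw [hpow]
    have a1 : v * (∫ y : Fin n → Ω, ∫ x, (NormedSpace.exp ((∑ k, Z (y k)) + Z x)).trace ∂μ
          ∂(Measure.pi fun _ => μ) - Fintype.card m) ≤
        v * (I + κ * (V.trace + v * (I - Fintype.card m)) - Fintype.card m) := by gcongr
    have a2 : v * κ * V.trace ≤ v * κ * τ := by gcongr
    have a3 : (1 + κ * v) * (v * (I - Fintype.card m)) ≤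
      (1 + κ * v) * (τ * ((1 + κ * v) ^ n - 1)) := by gcongr
    nlinarith [a1, a2, a3]

omit [IsProbabilityMeasure μ] in
theorem BernsteinData.neg (h : BernsteinData μ Z V u v τ B) :
    BernsteinData μ (fun x => -Z x) V u v τ B where
  meas i j := (h.meas i j).neg
  bdd x i j := by simpa using h.bdd x i j
  herm x := (h.herm x).neg
  mean i j := by simp [integral_neg, h.mean]
  quad x w := by simpa [neg_mulVec] using h.quad x w
  u_lt := h.u_lt
  V_psd := h.V_psd
  V_le := h.V_le
  V_tr := h.V_tr
  second E hE := by simpa using h.second E hE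

/-- Two-sided matrix Bernstein tail bound with intrinsic dimension `τ / v`: Markov's inequality for
`tr (2 cosh S - 2)`, `S` being the sum, with `mgf_bound` applied to `Z` and to `-Z`. The event
`‖S‖ > a` is expressed through the quadratic form of `S`. -/
theorem tail_bound (h : BernsteinData μ Z V u v τ B) {κ : ℝ} (hκ : κ = 1 / 2 / (1 - u / 3))
    (hv : 0 < v) (n : ℕ) {a : ℝ} (ha : 0 < a) :
    (Measure.pi fun _ : Fin n => μ).real {x | ∃ w : m → ℝ,
      a * (w ⬝ᵥ w) < |w ⬝ᵥ (∑ k, Z (x k)) *ᵥ w|} ≤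
      (τ / v * ((1 + κ * v) ^ n - 1)) / (Real.cosh a - 1) := by
  have hch : 0 < Real.cosh a - 1 := by
    have := Real.one_lt_cosh.2 ha.ne'; linarith
  set ν := Measure.pi fun _ : Fin n => μ with hν
  let F : (Fin n → Ω) → ℝ := fun x => (NormedSpace.exp (∑ k, Z (x k))).trace +
    (NormedSpace.exp (-∑ k, Z (x k))).trace - 2 * Fintype.card m
  have hF : ∀ x, F x = ∑ i, 2 * (Real.cosh ((sum_herm h n x).eigenvalues i) - 1) := by
    intro x
    simp only [F]
    rw [trace_exp_eq_sum (sum_herm h n x), trace_exp_neg_eq_sum (sum_herm h n x)]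
    simp only [Real.cosh_eq]
    rw [← Finset.sum_add_distrib]
    have : (2 * Fintype.card m : ℝ) = ∑ _i : m, (2 : ℝ) := by simp [mul_comm]
    rw [this, ← Finset.sum_sub_distrib]
    congr 1; funext i; ring
  have hF0 : ∀ x i, 0 ≤ 2 * (Real.cosh ((sum_herm h n x).eigenvalues i) - 1) := fun x i => by
    have := Real.one_le_cosh ((sum_herm h n x).eigenvalues i); linarith
  have iP : Integrable (fun x : Fin n → Ω => (NormedSpace.exp (∑ k, Z (x k))).trace) ν := by
    simpa using integrable_comp_of_bounded (continuous_trace_exp (0 : Matrix m m ℝ))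
      (sum_meas h n) (sum_bdd h n)
  have iN : Integrable (fun x : Fin n → Ω => (NormedSpace.exp (-∑ k, Z (x k))).trace) ν := by
    simpa using integrable_comp_of_bounded (continuous_trace_exp (0 : Matrix m m ℝ))
      (sum_meas h.neg n) (sum_bdd h.neg n)
  have iF : Integrable F ν := (iP.add iN).sub (integrable_const _)
  have hint : ∫ x, F x ∂ν ≤ 2 * (τ / v * ((1 + κ * v) ^ n - 1)) := by
    have b1 := mgf_bound h hκ hv.le n
    have b2 := mgf_bound h.neg hκ hv.le n
    simp only [Finset.sum_neg_distrib] at b2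
    have : ∫ x, F x ∂ν = ∫ x, (NormedSpace.exp (∑ k, Z (x k))).trace ∂ν +
        ∫ x, (NormedSpace.exp (-∑ k, Z (x k))).trace ∂ν - 2 * Fintype.card m := by
      simp only [F]
      have := integral_affine iP iN iN (-(2 * Fintype.card m)) 1 1 0
      rw [show ∀ p q r : ℝ, p + q - r = -r + 1 * p + 1 * q + 0 * q by intros; ring, ← this]
      refine integral_congr_ae (Filter.Eventually.of_forall fun y => ?_)
      simp only; ring
    rw [this, div_mul_eq_mul_div, ← mul_div_assoc, le_div_iff₀ hv]
    linarith
  have hsub : {x : Fin n → Ω | ∃ w : m → ℝ, a * (w ⬝ᵥ w) < |w ⬝ᵥ (∑ k, Z (x k)) *ᵥ w|} ⊆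
      {x | 2 * (Real.cosh a - 1) ≤ F x} := by
    rintro x ⟨w, hw⟩
    obtain ⟨i, hi⟩ : ∃ i, a < |(sum_herm h n x).eigenvalues i| := by
      by_contra! hcon
      exact absurd hw (not_lt.2 (abs_quadForm_le (sum_herm h n x) hcon w))
    change _ ≤ F x
    rw [hF]
    refine le_trans ?_ (Finset.single_le_sum (fun i _ => hF0 x i) (Finset.mem_univ i))
    have : Real.cosh a ≤ Real.cosh ((sum_herm h n x).eigenvalues i) := by
      rw [Real.cosh_le_cosh, abs_of_pos ha]; exact hi.le
    linarith
  have hmarkov := mul_meas_ge_le_integral_of_nonneg (μ := ν)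
    (Filter.Eventually.of_forall fun x => by
      change 0 ≤ F x
      rw [hF]; exact Finset.sum_nonneg fun i _ => hF0 x i) iF (2 * (Real.cosh a - 1))
  rw [le_div_iff₀ hch]
  have := measureReal_mono (μ := ν) hsub
  nlinarith

end Probability

/-! ### Empirical second moments in finite dimension -/

section RankOne

variable {Ω : Type*} [MeasurableSpace Ω] {μ : Measure Ω} [IsProbabilityMeasure μ]

omit [DecidableEq m] in
theorem abs_mul_apply_le {y : m → ℝ} {N : ℝ} (hN : y ⬝ᵥ y ≤ N) (i j : m) : |y i * y j| ≤ N := by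
  have h : ∀ i, y i ^ 2 ≤ N := fun i => by
    refine le_trans ?_ hN
    have := Finset.single_le_sum (f := fun i => y i * y i) (s := Finset.univ)
      (fun i _ => mul_self_nonneg (y i)) (Finset.mem_univ i)
    rw [sq]; exact this
  rw [abs_le]
  constructor <;> nlinarith [h i, h j, sq_nonneg (y i + y j), sq_nonneg (y i - y j)]

omit [DecidableEq m] in
theorem quadForm_vecMulVec (y w : m → ℝ) : w ⬝ᵥ vecMulVec y y *ᵥ w = (y ⬝ᵥ w) ^ 2 := by
  rw [vecMulVec_mulVec]
  simp [dotProduct_smul, dotProduct_comm w y, sq]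

omit [DecidableEq m] in
theorem sq_dotProduct_le (y w : m → ℝ) : (y ⬝ᵥ w) ^ 2 ≤ (y ⬝ᵥ y) * (w ⬝ᵥ w) := by
  have := Finset.sum_mul_sq_le_sq_mul_sq Finset.univ y w
  simpa [dotProduct, sq] using this

omit [DecidableEq m] in
theorem vecMulVec_posSemidef (y : m → ℝ) : (vecMulVec y y).PosSemidef := by
  simpa using posSemidef_vecMulVec_self_star y

/-- The Bernstein hypotheses hold for the centred rank-one matrices `θ (Y Yᵀ - E[Y Yᵀ])` when
`‖Y‖² ≤ N`. -/
theorem bernstein_rankOne {Y : Ω → m → ℝ} (hY : ∀ i, Measurable fun x => Y x i) {N P T θ : ℝ}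
    (hN : ∀ x, Y x ⬝ᵥ Y x ≤ N) {A : Matrix m m ℝ}
    (hA : A = Matrix.of fun i j => ∫ x, Y x i * Y x j ∂μ)
    (hP : ∀ w, w ⬝ᵥ A *ᵥ w ≤ P * (w ⬝ᵥ w)) (hT : A.trace ≤ T) (hN0 : 0 ≤ N) (hθ : 0 < θ)
    (hθN : θ * N < 3) :
    BernsteinData μ (fun x => θ • (vecMulVec (Y x) (Y x) - A)) ((θ ^ 2 * N) • A)
      (θ * N) (θ ^ 2 * N * P) (θ ^ 2 * N * T) (θ * (2 * N)) := by
  have hm : ∀ i j, Measurable fun x => Y x i * Y x j := fun i j => (hY i).mul (hY j)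
  have hW : ∀ i j, Integrable (fun x => vecMulVec (Y x) (Y x) i j) μ := fun i j =>
    Integrable.of_bound (C := N) (hm i j).aestronglyMeasurable
      (Filter.Eventually.of_forall fun x => abs_mul_apply_le (hN x) i j)
  have hAW : A = Matrix.of fun i j => ∫ x, vecMulVec (Y x) (Y x) i j ∂μ := hA
  have hAij : ∀ i j, A i j = ∫ x, Y x i * Y x j ∂μ := fun i j => by rw [hA]; rfl
  have hAb : ∀ i j, |A i j| ≤ N := fun i j => by
    rw [hAij]
    have := norm_integral_le_of_norm_le_const (μ := μ) (f := fun x => Y x i * Y x j) (C := N)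
      (Filter.Eventually.of_forall fun x => abs_mul_apply_le (hN x) i j)
    simpa using this
  have hAt : A.IsHermitian := by
    ext i j
    simp only [conjTranspose_apply, star_trivial, hAij]
    simp_rw [mul_comm]
  have hAtr : ∀ M : Matrix m m ℝ, ∫ x, (M * vecMulVec (Y x) (Y x)).trace ∂μ = (M * A).trace :=
    fun M => by rw [(integral_trace_mul hW M).2, ← hAW]
  have hq : ∀ (B : Matrix m m ℝ) (w : m → ℝ), (vecMulVec w w * B).trace = w ⬝ᵥ B *ᵥ w := by
    intro B w
    rw [vecMulVec_mul, trace_vecMulVec, dotProduct_comm, ← dotProduct_mulVec]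
  have hQA : ∀ w : m → ℝ, w ⬝ᵥ A *ᵥ w = ∫ x, (Y x ⬝ᵥ w) ^ 2 ∂μ := fun w => by
    rw [← hq, ← hAtr]
    refine integral_congr_ae (Filter.Eventually.of_forall fun x => ?_)
    simp only
    rw [hq, quadForm_vecMulVec]
  have hQ0 : ∀ w : m → ℝ, 0 ≤ w ⬝ᵥ A *ᵥ w := fun w => by
    rw [hQA]; exact integral_nonneg fun x => sq_nonneg _
  have hww : ∀ w : m → ℝ, 0 ≤ w ⬝ᵥ w := fun w => by
    simpa using dotProduct_star_self_nonneg w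
  have hQb : ∀ x (w : m → ℝ), (Y x ⬝ᵥ w) ^ 2 ≤ N * (w ⬝ᵥ w) := fun x w =>
    (sq_dotProduct_le _ _).trans (mul_le_mul_of_nonneg_right (hN x) (hww w))
  have hQN : ∀ w : m → ℝ, w ⬝ᵥ A *ᵥ w ≤ N * (w ⬝ᵥ w) := fun w => by
    rw [hQA]
    have := integral_mono_of_nonneg (μ := μ) (f := fun x => (Y x ⬝ᵥ w) ^ 2)
      (g := fun _ => N * (w ⬝ᵥ w)) (Filter.Eventually.of_forall fun x => sq_nonneg _)
      (integrable_const _) (Filter.Eventually.of_forall fun x => hQb x w)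
    simpa using this
  have hApsd : A.PosSemidef := PosSemidef.of_dotProduct_mulVec_nonneg hAt (fun w => by
    simpa using hQ0 w)
  have hZm : ∀ i j, Measurable fun x => (θ • (vecMulVec (Y x) (Y x) - A)) i j := fun i j => by
    simpa [vecMulVec_apply] using ((hm i j).sub measurable_const).const_mul θ
  have hZb : ∀ x i j, |(θ • (vecMulVec (Y x) (Y x) - A)) i j| ≤ θ * (2 * N) := fun x i j => by
    simp only [Matrix.smul_apply, Matrix.sub_apply, vecMulVec_apply, smul_eq_mul, abs_mul, abs_of_pos hθ]
    refine mul_le_mul_of_nonneg_left ?_ hθ.le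
    have := abs_mul_apply_le (hN x) i j
    linarith [abs_sub (Y x i * Y x j) (A i j), hAb i j]
  refine ⟨hZm, hZb, ?_, ?_, ?_, hθN, ?_, ?_, ?_, ?_⟩
  · intro x
    ext i j
    have := hAt.apply i j
    simp only [star_trivial] at this
    simp [vecMulVec_apply, this, mul_comm]
  · intro i j
    have : ∀ x, (θ • (vecMulVec (Y x) (Y x) - A)) i j = θ * (Y x i * Y x j - A i j) := fun x => by
      simp [vecMulVec_apply]
    simp_rw [this]
    have hW' : Integrable (fun x => Y x i * Y x j) μ := hW i j
    rw [integral_const_mul, integral_sub hW' (integrable_const _), hAij]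
    simp
  · intro x w
    rw [smul_mulVec, dotProduct_smul, sub_mulVec, dotProduct_sub, quadForm_vecMulVec, smul_eq_mul,
      abs_mul, abs_of_pos hθ, mul_assoc]
    refine mul_le_mul_of_nonneg_left ?_ hθ.le
    rw [abs_le]
    constructor <;> linarith [hQb x w, hQN w, hQ0 w, sq_nonneg (Y x ⬝ᵥ w)]
  · exact hApsd.smul (by positivity)
  · refine PosSemidef.of_dotProduct_mulVec_nonneg ?_ (fun w => ?_)
    · exact (isHermitian_one.smul (star_trivial _)).sub (hAt.smul (star_trivial _))
    · simp only [star_trivial, sub_mulVec, smul_mulVec, one_mulVec, dotProduct_sub,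
        dotProduct_smul, smul_eq_mul]
      have := mul_le_mul_of_nonneg_left (hP w) (show 0 ≤ θ ^ 2 * N by positivity)
      linarith
  · rw [trace_smul, smul_eq_mul]
    exact mul_le_mul_of_nonneg_left hT (by positivity)
  · intro E hE
    -- Pointwise `W² ≤ N W` for `W = Y Yᵀ`; after integration the right side becomes
    -- `θ² (N tr (E A) - tr (E A²))`, and the last term is dropped.
    have key : ∀ x, (E * ((θ • (vecMulVec (Y x) (Y x) - A)) * (θ • (vecMulVec (Y x) (Y x) - A)))).trace
        ≤ θ ^ 2 * (E * (A * A)).trace + θ ^ 2 * ((N • E - (A * E + E * A)) * vecMulVec (Y x) (Y x)).trace := by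
      intro x
      set W := vecMulVec (Y x) (Y x) with hWd
      have hWW : W * W = (Y x ⬝ᵥ Y x) • W := by
        rw [hWd, vecMulVec_mul_vecMulVec, vecMulVec_smul]
      have e1 : (E * (W * W)).trace ≤ N * (E * W).trace := by
        rw [hWW, mul_smul_comm, trace_smul, smul_eq_mul]
        exact mul_le_mul_of_nonneg_right (hN x)
          (trace_mul_nonneg hE (vecMulVec_posSemidef (Y x)))
      have e2 : (E * (W * A)).trace = (A * E * W).trace := by
        rw [← mul_assoc, trace_mul_comm, mul_assoc]
      have : (E * ((θ • (W - A)) * (θ • (W - A)))).trace = θ ^ 2 *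
          ((E * (W * W)).trace - (E * (W * A)).trace - (E * (A * W)).trace + (E * (A * A)).trace) := by
        simp only [smul_mul_assoc, mul_smul_comm, trace_smul, smul_eq_mul, mul_sub,
          sub_mul, trace_sub]
        ring
      rw [this, ← mul_add]
      refine mul_le_mul_of_nonneg_left ?_ (by positivity)
      simp only [sub_mul, add_mul, trace_sub, trace_add, smul_mul_assoc, trace_smul, smul_eq_mul]
      rw [e2, mul_assoc E A W]
      linarith
    obtain ⟨hi, he⟩ := integral_trace_mul hW (N • E - (A * E + E * A))
    rw [← hAW] at he
    have i3 : Integrable (fun x => (E * ((θ • (vecMulVec (Y x) (Y x) - A)) *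
        (θ • (vecMulVec (Y x) (Y x) - A)))).trace) μ :=
      integrable_comp_of_bounded (f := fun W => (E * (W * W)).trace)
        ((continuous_const.matrix_mul (continuous_id.matrix_mul continuous_id)).matrix_trace)
        hZm hZb
    refine (integral_mono i3 ((integrable_const _).add (hi.const_mul _)) key).trans ?_
    have hAA : 0 ≤ (E * (A * A)).trace := trace_mul_nonneg hE (by
      have := posSemidef_self_mul_conjTranspose A
      rwa [hAt.eq] at this)
    simp only [Pi.add_apply]
    rw [integral_add (integrable_const _) (hi.const_mul _), integral_const_mul (θ ^ 2) fun a =>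
      ((N • E - (A * E + E * A)) * vecMulVec (Y a) (Y a)).trace, he]
    simp only [sub_mul, add_mul, trace_sub, trace_add, smul_mul_assoc, trace_smul, smul_eq_mul,
      mul_smul_comm, integral_const, probReal_univ, one_mul]
    have e3 : (A * E * A).trace = (E * (A * A)).trace := by
      rw [mul_assoc, trace_mul_comm, mul_assoc]
    have e4 : (E * A * A).trace = (E * (A * A)).trace := by rw [mul_assoc]
    rw [e3, e4]
    have := mul_nonneg (sq_nonneg θ) hAA
    nlinarith

/-- Equality holds at `a = log 4`. -/
theorem cosh_sub_one_ge {a : ℝ} (ha : Real.log 4 ≤ a) : 9 / 32 * Real.exp a ≤ Real.cosh a - 1 := by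
  have hy : 4 ≤ Real.exp a := by
    rw [← Real.exp_log (show (0 : ℝ) < 4 by norm_num)]; exact Real.exp_le_exp.2 ha
  rw [Real.cosh_eq, Real.exp_neg]
  set y := Real.exp a
  have hy0 : 0 < y := by linarith
  have : (y + y⁻¹) / 2 - 1 - 9 / 32 * y = (y - 4) * (7 * y - 4) / (32 * y) := by
    field_simp; ring
  have : 0 ≤ (y - 4) * (7 * y - 4) / (32 * y) :=
    div_nonneg (mul_nonneg (by linarith) (by linarith)) (by linarith)
  linarith

/-- Bernstein's inequality for the empirical second moment of bounded random vectors in finite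
dimension, which enters only through `T / P`, with `T` a bound for the trace and `P` for the norm
of the second moment matrix `A`. The factor `32 / 9` comes from replacing `cosh a - 1` by `exp a`. -/
theorem finite_dim_tail {Y : Ω → m → ℝ} (hY : ∀ i, Measurable fun x => Y x i) {N P T β : ℝ}
    (hN : ∀ x, Y x ⬝ᵥ Y x ≤ N) {A : Matrix m m ℝ}
    (hA : A = Matrix.of fun i j => ∫ x, Y x i * Y x j ∂μ)
    (hP : ∀ w, w ⬝ᵥ A *ᵥ w ≤ P * (w ⬝ᵥ w)) (hT : A.trace ≤ T) (hN0 : 0 < N) (hP0 : 0 < P)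
    (hT0 : 0 ≤ T) (hβ : Real.log 4 ≤ β) {n : ℕ} (hn : 0 < n) :
    (Measure.pi fun _ : Fin n => μ).real {x | ∃ w : m → ℝ,
      (N * β / (3 * n) + √(2 * P * N * β / n)) * (w ⬝ᵥ w) <
        |w ⬝ᵥ ((n : ℝ)⁻¹ • ∑ k, vecMulVec (Y (x k)) (Y (x k)) - A) *ᵥ w|} ≤
      T / P * (32 / 9) * Real.exp (-β) := by
  have hn' : (0 : ℝ) < n := by exact_mod_cast hn
  have hβ0 : 0 < β := (Real.log_pos (by norm_num)).trans_le hβ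
  set q := √(n * N * P / (2 * β)) with hqd
  have hq : 0 < q := Real.sqrt_pos.2 (by positivity)
  have hq2 : n * N * P = 2 * β * q ^ 2 := by
    rw [hqd, Real.sq_sqrt (by positivity)]; field_simp
  have hs : √(2 * P * N * β / n) = 2 * β * q / n := by
    rw [Real.sqrt_eq_iff_mul_self_eq (by positivity) (by positivity)]
    field_simp
    linear_combination hq2
  -- This `θ` optimises the Chernoff bound: the exponent is then exactly `β`.
  set θ := 1 / (N / 3 + q) with hθd
  have hden : 0 < N / 3 + q := by positivity
  have hθ : 0 < θ := by positivity
  have hθ1 : θ * (N / 3 + q) = 1 := by rw [hθd]; field_simp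
  have hθN : θ * N < 3 := by nlinarith [mul_pos hθ hq]
  have hd := bernstein_rankOne (μ := μ) hY hN hA hP hT hN0.le hθ hθN
  set κ : ℝ := 1 / 2 / (1 - θ * N / 3) with hκ
  have hκ' : κ = 1 / (2 * (θ * q)) := by
    rw [hκ, show 1 - θ * N / 3 = θ * q by linarith]; field_simp
  have hv : 0 < θ ^ 2 * N * P := by positivity
  have hκv : n * (κ * (θ ^ 2 * N * P)) = θ * β * q := by
    rw [hκ']; field_simp; linear_combination hq2
  set a := β + θ * β * q with had
  have ha : Real.log 4 ≤ a := by have : 0 < θ * β * q := by positivity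
                                 linarith
  have ha0 : 0 < a := (Real.log_pos (by norm_num)).trans_le ha
  have hsa : θ * n * (N * β / (3 * n) + √(2 * P * N * β / n)) = a := by
    rw [hs, had]; field_simp
    linear_combination 3 * hθ1
  have htail := tail_bound hd hκ hv n ha0
  have hset : {x : Fin n → Ω | ∃ w : m → ℝ,
      (N * β / (3 * n) + √(2 * P * N * β / n)) * (w ⬝ᵥ w) <
        |w ⬝ᵥ ((n : ℝ)⁻¹ • ∑ k, vecMulVec (Y (x k)) (Y (x k)) - A) *ᵥ w|} ⊆
      {x | ∃ w : m → ℝ, a * (w ⬝ᵥ w) <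
        |w ⬝ᵥ (∑ k, θ • (vecMulVec (Y (x k)) (Y (x k)) - A)) *ᵥ w|} := by
    rintro x ⟨w, hw⟩
    refine ⟨w, ?_⟩
    have e : ∑ k, θ • (vecMulVec (Y (x k)) (Y (x k)) - A) =
        (θ * n) • ((n : ℝ)⁻¹ • ∑ k, vecMulVec (Y (x k)) (Y (x k)) - A) := by
      rw [← Finset.smul_sum, Finset.sum_sub_distrib, mul_smul, smul_sub (n : ℝ), smul_smul,
        mul_inv_cancel₀ hn'.ne', one_smul]
      simp [Nat.cast_smul_eq_nsmul]
    rw [e, smul_mulVec, dotProduct_smul, smul_eq_mul, abs_mul, abs_of_pos (by positivity : 0 < θ * n),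
      ← hsa, mul_assoc]
    exact mul_lt_mul_of_pos_left hw (by positivity)
  refine (measureReal_mono hset).trans (htail.trans ?_)
  have hκ0 : 0 < κ := by rw [hκ']; positivity
  have hpow : (1 + κ * (θ ^ 2 * N * P)) ^ n ≤ Real.exp (a - β) := by
    rw [show a - β = n * (κ * (θ ^ 2 * N * P)) by rw [hκv, had]; ring, Real.exp_nat_mul]
    refine pow_le_pow_left₀ (by positivity) ?_ n
    rw [add_comm]; exact Real.add_one_le_exp _
  have hc := cosh_sub_one_ge ha
  have hTP : θ ^ 2 * N * T / (θ ^ 2 * N * P) = T / P := by field_simp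
  rw [hTP, div_le_iff₀ (lt_of_lt_of_le (by positivity) hc)]
  have h0 : 0 ≤ T / P := by positivity
  calc T / P * ((1 + κ * (θ ^ 2 * N * P)) ^ n - 1) ≤ T / P * Real.exp (a - β) :=
        mul_le_mul_of_nonneg_left (by linarith) h0
    _ = T / P * (32 / 9) * Real.exp (-β) * (9 / 32 * Real.exp a) := by
        rw [sub_eq_add_neg, Real.exp_add]; ring
    _ ≤ _ := mul_le_mul_of_nonneg_left hc (by positivity)

end RankOne

/-! ### Passage to a separable Hilbert space -/

section Hilbert

variable {H : Type*} [NormedAddCommGroup H] [InnerProductSpace ℝ H]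

/-- The balls of radius `1 / 2` about the basis vectors are disjoint, as these vectors lie at mutual
distance `√2`; a separable space contains only countably many such balls. -/
theorem countable_hilbertBasis [TopologicalSpace.SeparableSpace H] {ι : Type*}
    (b : HilbertBasis ι ℝ H) : Countable ι := by
  refine Pairwise.countable_of_isOpen_disjoint (s := fun i => Metric.ball (b i) (1 / 2)) ?_
    (fun i => Metric.isOpen_ball) (fun i => Metric.nonempty_ball.2 (by norm_num))
  intro i j hij
  apply Metric.ball_disjoint_ball
  have h0 : ⟪b i, b j⟫ = 0 := b.orthonormal.2 hij
  have h2 : ‖b i - b j‖ ^ 2 = 2 := by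
    rw [norm_sub_sq_real, h0, b.orthonormal.1 i, b.orthonormal.1 j]; norm_num
  rw [dist_eq_norm]
  nlinarith [norm_nonneg (b i - b j)]

/-- The norm of a symmetric operator is the supremum of its Rayleigh quotients. -/
theorem exists_quadForm_gt {Q : H →L[ℝ] H} (hQ : ∀ u v, ⟪Q u, v⟫ = ⟪u, Q v⟫) {s : ℝ} (hs : 0 ≤ s)
    (h : s < ‖Q‖) : ∃ u, s * ‖u‖ ^ 2 < |⟪Q u, u⟫| := by
  by_contra! hc
  refine absurd h (not_lt.2 ?_)
  have hQ' : (Q : H →ₗ[ℝ] H).IsSymmetric := hQ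
  rw [Q.norm_eq_iSup_rayleighQuotient hQ']
  refine ciSup_le fun u => ?_
  rw [ContinuousLinearMap.rayleighQuotient, ContinuousLinearMap.reApplyInnerSelf_apply, abs_div,
    abs_sq]
  exact div_le_of_le_mul₀ (sq_nonneg _) hs (hc u)

variable {ι : Type*}

/-- The matrix `B` of the compression of `Q` to the span of `b i`, `i ∈ J`, has the quadratic form of
`Q` restricted to that span. -/
theorem quadForm_compression {b : ι → H} {J : Finset ι} {Q : H →L[ℝ] H}
    {B : Matrix J J ℝ} (hB : ∀ i j, B i j = ⟪b i, Q (b j)⟫) (w : J → ℝ) :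
    w ⬝ᵥ B *ᵥ w = ⟪∑ i, w i • b i, Q (∑ i, w i • b i)⟫ := by
  simp only [dotProduct, mulVec, hB, map_sum, sum_inner, inner_sum, map_smul, real_inner_smul_left,
    real_inner_smul_right, Finset.mul_sum]
  rw [Finset.sum_comm]
  refine Finset.sum_congr rfl fun i _ => Finset.sum_congr rfl fun j _ => ?_
  ring

theorem norm_sq_sum_smul {b : ι → H} (hb : Orthonormal ℝ b) {J : Finset ι} (w : J → ℝ) :
    ‖∑ i, w i • b i‖ ^ 2 = w ⬝ᵥ w := by
  have hb' : Orthonormal ℝ (fun i : J => b i) := hb.comp _ Subtype.val_injective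
  rw [← real_inner_self_eq_norm_sq, hb'.inner_sum]
  simp [dotProduct]

variable {Ω : Type*} [MeasurableSpace Ω] {μ : Measure Ω} [IsProbabilityMeasure μ]

/-- The event that the quadratic form of `Q` exceeds `s` in absolute value somewhere on the span of
`b i`, `i ∈ J`. Coefficients are indexed by all of `ι` and required to vanish off `J`, which makes
monotonicity in `J` immediate. -/
def badSet {X : Type*} (b : ι → H) (Q : X → H →L[ℝ] H) (s : ℝ) (J : Finset ι) : Set X :=
  {x | ∃ c : ι → ℝ, (∀ i ∉ J, c i = 0) ∧
    s * ‖∑ i ∈ J, c i • b i‖ ^ 2 < |⟪∑ i ∈ J, c i • b i, Q x (∑ i ∈ J, c i • b i)⟫|}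

theorem badSet_mono {X : Type*} (b : ι → H) (Q : X → H →L[ℝ] H) (s : ℝ) :
    Monotone (badSet b Q s) := by
  rintro J J' hJ x ⟨c, hc, h⟩
  refine ⟨c, fun i hi => hc i fun h => hi (hJ h), ?_⟩
  rwa [← Finset.sum_subset hJ fun i _ hi => by simp [hc i hi]]

/-- If `‖Q x‖ > s`, then the quadratic form of `Q x` exceeds `s` at some vector; this is an open
condition, so it persists at the partial sums of the expansion of that vector in the basis. -/
theorem norm_gt_subset_iUnion {X : Type*} (b : HilbertBasis ι ℝ H) {Q : X → H →L[ℝ] H}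
    (hQ : ∀ x u v, ⟪Q x u, v⟫ = ⟪u, Q x v⟫) {s : ℝ} (hs : 0 ≤ s) :
    {x | s < ‖Q x‖} ⊆ ⋃ J, badSet b Q s J := by
  classical
  intro x hx
  obtain ⟨u, hu⟩ := exists_quadForm_gt (hQ x) hs hx
  rw [real_inner_comm] at hu
  have hlim := b.hasSum_repr u
  rw [HasSum] at hlim
  have h1 : Continuous fun v : H => s * ‖v‖ ^ 2 := by fun_prop
  have h2 : Continuous fun v : H => |⟪v, Q x v⟫| := by fun_prop
  have hev := ((isOpen_lt h1 h2).mem_nhds hu)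
  obtain ⟨J, hJ⟩ := (hlim.eventually hev).exists
  refine Set.mem_iUnion.2 ⟨J, fun i => if i ∈ J then b.repr u i else 0, fun i hi => by simp [hi], ?_⟩
  have e : ∑ i ∈ J, (if i ∈ J then b.repr u i else 0) • b i = ∑ i ∈ J, b.repr u i • b i :=
    Finset.sum_congr rfl fun i hi => by rw [if_pos hi]
  beta_reduce
  rw [e]
  exact hJ

/-- Bernstein's inequality for the empirical second moment of bounded random vectors in a Hilbert
space. The bound of `finite_dim_tail` is independent of the dimension, hence uniform over the sets
`badSet b Q s J`, and passes to their increasing union by continuity from below. -/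
theorem hilbert_tail [TopologicalSpace.SeparableSpace H] [MeasurableSpace H] [BorelSpace H]
    (b : HilbertBasis ι ℝ H) {f : Ω → H} (hf : Measurable f)
    {M : H →L[ℝ] H} (hM : ∀ u v, ⟪u, M v⟫ = ∫ x, ⟪f x, u⟫ * ⟪f x, v⟫ ∂μ)
    {N P T β : ℝ} (hN : ∀ x, ‖f x‖ ^ 2 ≤ N) (hMP : ‖M‖ ≤ P) (hT : ∫ x, ‖f x‖ ^ 2 ∂μ ≤ T)
    (hN0 : 0 < N) (hP0 : 0 < P) (hβ : Real.log 4 ≤ β) {n : ℕ} (hn : 0 < n) :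
    (Measure.pi fun _ : Fin n => μ) {x | N * β / (3 * n) + √(2 * P * N * β / n) <
      ‖(n : ℝ)⁻¹ • ∑ k, (innerSL ℝ (f (x k))).smulRight (f (x k)) - M‖} ≤
      ENNReal.ofReal (T / P * (32 / 9) * Real.exp (-β)) := by
  classical
  have := countable_hilbertBasis b
  have hβ0 : 0 ≤ β := (Real.log_nonneg (by norm_num)).trans hβ
  have hT0 : 0 ≤ T := (integral_nonneg fun x => sq_nonneg _).trans hT
  set s := N * β / (3 * n) + √(2 * P * N * β / n) with hs
  have hs0 : 0 ≤ s := by positivity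
  let Q : (Fin n → Ω) → H →L[ℝ] H := fun x =>
    (n : ℝ)⁻¹ • ∑ k, (innerSL ℝ (f (x k))).smulRight (f (x k)) - M
  have hQe : ∀ x u v, ⟪u, Q x v⟫ = (n : ℝ)⁻¹ * ∑ k, ⟪f (x k), u⟫ * ⟪f (x k), v⟫ - ⟪u, M v⟫ := by
    intro x u v
    simp only [Q, _root_.sub_apply, _root_.smul_apply,
      _root_.sum_apply, ContinuousLinearMap.smulRight_apply, innerSL_apply_apply,
      inner_sub_right, real_inner_smul_right, inner_sum]
    congr 2
    exact Finset.sum_congr rfl fun k _ => by rw [real_inner_comm (f (x k)) u, mul_comm]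
  have hMs : ∀ u v, ⟪u, M v⟫ = ⟪v, M u⟫ := fun u v => by rw [hM, hM]; simp_rw [mul_comm]
  have hQs : ∀ x u v, ⟪Q x u, v⟫ = ⟪u, Q x v⟫ := fun x u v => by
    rw [real_inner_comm, hQe, hQe, hMs]; simp_rw [mul_comm ⟪f _, v⟫]
  refine (measure_mono (norm_gt_subset_iUnion b hQs hs0)).trans ?_
  -- Continuity from below holds for arbitrary sets, so no measurability of `badSet` is needed.
  rw [(badSet_mono b Q s).measure_iUnion]
  refine iSup_le fun J => ?_
  let Y : Ω → J → ℝ := fun x i => ⟪f x, b i⟫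
  have hY : ∀ i, Measurable fun x => Y x i := fun i => by
    have : Continuous fun v : H => ⟪v, b i⟫ := by fun_prop
    exact this.measurable.comp hf
  have hYY : ∀ x, Y x ⬝ᵥ Y x ≤ ‖f x‖ ^ 2 := fun x => by
    have := b.orthonormal.sum_inner_products_le (f x) (s := J)
    rw [← Finset.sum_coe_sort J (fun i => ‖⟪b i, f x⟫‖ ^ 2)] at this
    refine le_of_eq_of_le (Finset.sum_congr rfl fun i _ => ?_) this
    simp only [Y, real_inner_comm, Real.norm_eq_abs, sq_abs]
    ring
  let A : Matrix J J ℝ := Matrix.of fun i j => ∫ x, Y x i * Y x j ∂μ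
  have hAe : ∀ i j, A i j = ⟪b i, M (b j)⟫ := fun i j => (hM _ _).symm
  have hint : ∀ i j, Integrable (fun x => Y x i * Y x j) μ := fun i j =>
    Integrable.of_bound (C := N) ((hY i).mul (hY j)).aestronglyMeasurable
      (Filter.Eventually.of_forall fun x => abs_mul_apply_le ((hYY x).trans (hN x)) i j)
  have hf2 : Integrable (fun x => ‖f x‖ ^ 2) μ :=
    Integrable.of_bound (C := N) (hf.norm.pow_const 2).aestronglyMeasurable
      (Filter.Eventually.of_forall fun x => by
        rw [Real.norm_eq_abs, abs_of_nonneg (sq_nonneg _)]; exact hN x)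
  have hAP : ∀ w, w ⬝ᵥ A *ᵥ w ≤ P * (w ⬝ᵥ w) := fun w => by
    rw [quadForm_compression hAe, ← norm_sq_sum_smul b.orthonormal]
    set h := ∑ i, w i • b i
    calc ⟪h, M h⟫ ≤ ‖h‖ * ‖M h‖ := real_inner_le_norm _ _
      _ ≤ ‖h‖ * (P * ‖h‖) := by gcongr; exact M.le_of_opNorm_le hMP h
      _ = P * ‖h‖ ^ 2 := by ring
  have hAT : A.trace ≤ T := by
    refine le_trans ?_ hT
    simp only [trace, diag_apply, A, of_apply]
    rw [← integral_finsetSum _ fun i _ => hint i i]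
    exact integral_mono (integrable_finsetSum _ fun i _ => hint i i) hf2 hYY
  have key := finite_dim_tail (μ := μ) hY (fun x => (hYY x).trans (hN x)) rfl hAP hAT hN0 hP0 hT0 hβ hn
  rw [← hs, Measure.real] at key
  refine le_trans (measure_mono ?_) ((ENNReal.le_ofReal_iff_toReal_le (measure_ne_top _ _)
    (by positivity)).2 key)
  rintro x ⟨c, -, hc⟩
  refine ⟨fun i : J => c i, ?_⟩
  rw [← norm_sq_sum_smul b.orthonormal, quadForm_compression (Q := Q x) (b := b)]
  · rwa [← Finset.sum_coe_sort J fun i => c i • b i] at hc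
  · intro i j
    rw [hQe, ← hAe, Matrix.sub_apply, Matrix.smul_apply, Matrix.sum_apply]
    rfl

end Hilbert

/-! ### Regularized covariance operators -/

section Covariance

variable {H : Type*} [NormedAddCommGroup H] [InnerProductSpace ℝ H]

/-- If `R² = (D + λ)⁻¹` with `D` positive, then `λ ‖R h‖² ≤ ‖h‖²`. -/
theorem norm_sq_le_of_sq_inverse {D R : H →L[ℝ] H} (hD : D.IsPositive) (hR : R.IsPositive)
    {lam : ℝ} (hlam : 0 < lam) (h2 : (D + lam • (1 : H →L[ℝ] H)) ∘L (R ∘L R) = 1) (h : H) :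
    lam * ‖R h‖ ^ 2 ≤ ‖h‖ ^ 2 := by
  set g := R (R h) with hg
  have e : D g + lam • g = h := by
    have := congrArg (fun A : H →L[ℝ] H => A h) h2
    simpa using this
  have e1 : ⟪g, h⟫ = ‖R h‖ ^ 2 := by
    rw [hg, ← real_inner_self_eq_norm_sq]; exact hR.isSymmetric _ _
  have e2 : lam * ‖g‖ ^ 2 ≤ ⟪g, h⟫ := by
    conv_rhs => rw [← e]
    rw [inner_add_right, real_inner_smul_right, real_inner_self_eq_norm_sq]
    linarith [hD.inner_nonneg_right g]
  have e3 : ⟪g, h⟫ ≤ ‖g‖ * ‖h‖ := real_inner_le_norm _ _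
  rw [e1] at e2 e3
  have hr : 0 ≤ ‖R h‖ ^ 2 := sq_nonneg _
  rcases (norm_nonneg g).eq_or_lt with h0 | h0
  · rw [← h0] at e3
    have : ‖R h‖ ^ 2 = 0 := by linarith
    rw [this]; simp
  · have h4 : lam * ‖g‖ ≤ ‖h‖ := by nlinarith
    calc lam * ‖R h‖ ^ 2 ≤ lam * (‖g‖ * ‖h‖) := by gcongr
      _ = (lam * ‖g‖) * ‖h‖ := by ring
      _ ≤ ‖h‖ * ‖h‖ := by gcongr
      _ = ‖h‖ ^ 2 := by ring

theorem norm_rankOne (u : H) : ‖(innerSL ℝ u).smulRight u‖ = ‖u‖ ^ 2 := by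
  rw [ContinuousLinearMap.norm_smulRight_apply, innerSL_apply_norm, sq]

variable {Ω : Type*} [MeasurableSpace Ω] {μ : Measure Ω}

/-- The weak form of the covariance operator. -/
theorem inner_covariance [CompleteSpace H] {φ : Ω → H}
    (hi : Integrable (fun x => (innerSL ℝ (φ x)).smulRight (φ x)) μ) (u v : H) :
    ⟪u, (∫ x, (innerSL ℝ (φ x)).smulRight (φ x) ∂μ) v⟫ = ∫ x, ⟪φ x, u⟫ * ⟪φ x, v⟫ ∂μ := by
  have h1 := ContinuousLinearMap.integral_apply hi v
  rw [h1]
  have hi' : Integrable (fun x => ((innerSL ℝ (φ x)).smulRight (φ x)) v) μ :=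
    hi.apply_continuousLinearMap v
  have h2 := (innerSL ℝ u).integral_comp_comm hi'
  simp only [innerSL_apply_apply] at h2
  rw [← h2]
  refine integral_congr_ae (Filter.Eventually.of_forall fun x => ?_)
  simp only [ContinuousLinearMap.smulRight_apply, innerSL_apply_apply, real_inner_smul_right]
  rw [real_inner_comm u (φ x), mul_comm]

/-- The trace of a covariance operator, computed in a Hilbert basis, is the second moment of the
norm. -/
theorem integral_norm_sq_eq_trace [TopologicalSpace.SeparableSpace H] {ι : Type*}
    (b : HilbertBasis ι ℝ H) {φ : Ω → H} (hφ : AEStronglyMeasurable φ μ)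
    (hφ2 : Integrable (fun x => ‖φ x‖ ^ 2) μ)
    {t : ℝ} (ht : HasSum (fun i => ∫ x, ⟪φ x, b i⟫ ^ 2 ∂μ) t) :
    ∫ x, ‖φ x‖ ^ 2 ∂μ = t := by
  have := countable_hilbertBasis b
  have hi : ∀ i, Integrable (fun x => ⟪φ x, b i⟫ ^ 2) μ := fun i => by
    refine hφ2.mono' ((hφ.inner aestronglyMeasurable_const).pow 2)
      (Filter.Eventually.of_forall fun x => ?_)
    rw [Real.norm_eq_abs, abs_of_nonneg (sq_nonneg _), sq_le_sq, abs_of_nonneg (norm_nonneg _)]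
    simpa [b.orthonormal.1 i] using abs_real_inner_le_norm (φ x) (b i)
  have h := hasSum_integral_of_summable_integral_norm hi (by simpa using ht.summable)
  rw [← h.unique ht]
  refine integral_congr_ae (Filter.Eventually.of_forall fun x => ?_)
  have := b.hasSum_inner_mul_inner (φ x) (φ x)
  rw [real_inner_self_eq_norm_sq] at this
  simp only
  rw [← this.tsum_eq]
  refine tsum_congr fun i => ?_
  rw [real_inner_comm (φ x) (b i), sq]

/-- The threshold obtained with the single exponent `β = log (4k / δ)` is at most the one with
`log (2k / δ)` in the first term: since `4k / δ ≥ 4`, `β ≤ 4 (β - log 2)`. -/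
theorem threshold_le {N k δ : ℝ} {n : ℕ} (hN : 0 ≤ N) (hk : 1 ≤ k) (hδ : 0 < δ)
    (hδ1 : δ ≤ 1) :
    Real.log 4 ≤ Real.log (4 * k / δ) ∧
    N * Real.log (4 * k / δ) / (3 * n) ≤ 4 * N * Real.log (2 * k / δ) / (3 * n) := by
  have hk0 : 0 < k := by linarith
  have h4 : Real.log 4 ≤ Real.log (4 * k / δ) := by
    refine Real.log_le_log (by norm_num) ?_
    rw [le_div_iff₀ hδ]; nlinarith
  refine ⟨h4, ?_⟩
  have e : Real.log (4 * k / δ) = Real.log 2 + Real.log (2 * k / δ) := by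
    rw [← Real.log_mul (by norm_num) (by positivity)]; congr 1; ring
  have e4 : Real.log 4 = 2 * Real.log 2 := by
    rw [show (4 : ℝ) = 2 ^ 2 by norm_num, Real.log_pow]; norm_num
  have hl : 0 < Real.log 2 := Real.log_pos (by norm_num)
  refine div_le_div_of_nonneg_right ?_ (by positivity)
  rw [show 4 * N * Real.log (2 * k / δ) = N * (4 * Real.log (2 * k / δ)) by ring]
  exact mul_le_mul_of_nonneg_left (by linarith) hN

end Covariance

end RegCov

/-- Concentration of the regularized empirical covariance `Ĉₙ` around
`C = ∫ φ(x) ⊗ φ(x) dμ(x)`: with probability at least `1 - δ` over the i.i.d. samples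
`x₁, …, xₙ ∼ μ`,
`‖(D + λI)^{-1/2} (Ĉₙ - C) (D + λI)^{-1/2}‖ ≤ 4N_λ log(2P Tr C/(λδ))/(3n) + √(2P N_λ log(4P Tr C/(λδ))/n)`,
where `(D + λI)^{-1/2}` is the inverse of the positive square root of `D + λI`. -/
theorem concentration_regularized_empirical_C
    {H : Type*} [NormedAddCommGroup H] [InnerProductSpace ℝ H] [CompleteSpace H]
    [TopologicalSpace.SeparableSpace H] [MeasurableSpace H] [BorelSpace H]
    {Ω : Type*} [MeasurableSpace Ω] (μ : Measure Ω) [IsProbabilityMeasure μ]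
    (d : ℕ) (φ : Ω → H) (ψ : Fin d → Ω → H)
    (hφmeas : Measurable φ) (hψmeas : ∀ j, Measurable (ψ j))
    (C : H →L[ℝ] H) (hC : C = ∫ x, (innerSL ℝ (φ x)).smulRight (φ x) ∂μ)
    (hCpos : C.IsPositive)
    (D : H →L[ℝ] H)
    (hD : D = ∫ x, (∑ j, (innerSL ℝ (ψ j x)).smulRight (ψ j x)) ∂μ)
    (hDpos : D.IsPositive)
    {ι : Type*} (b : HilbertBasis ι ℝ H)
    (trC : ℝ) (htrC : HasSum (fun i => ⟪C (b i), b i⟫) trC)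
    (lam : ℝ) (hlam : 0 < lam)
    (R : H →L[ℝ] H) (hRpos : R.IsPositive)
    (hR₁ : (R ∘L R) ∘L (D + lam • (1 : H →L[ℝ] H)) = 1)
    (hR₂ : (D + lam • (1 : H →L[ℝ] H)) ∘L (R ∘L R) = 1)
    (Nl : ℝ) (hNl : 0 ≤ Nl) (hNbound : ∀ x, ‖R (φ x)‖ ^ 2 ≤ Nl)
    (P : ℝ) (hP : 0 < P)
    (hPle : 1 / P ≤ ‖R ∘L C ∘L R‖) (hPge : ‖R ∘L C ∘L R‖ ≤ P)
    (n : ℕ) (hn : 0 < n)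
    (δ : ℝ) (hδ : δ ∈ Set.Ioc (0 : ℝ) 1) :
    ENNReal.ofReal (1 - δ) ≤
      (Measure.pi fun _ : Fin n => μ)
        {x | ‖R ∘L (((n : ℝ)⁻¹ • ∑ i : Fin n, (innerSL ℝ (φ (x i))).smulRight (φ (x i))) - C)
              ∘L R‖ ≤
          4 * Nl * Real.log (2 * P * trC / (lam * δ)) / (3 * n) +
            Real.sqrt (2 * P * Nl * Real.log (4 * P * trC / (lam * δ)) / n)} := by
  have hRs : ∀ u v, ⟪R u, v⟫ = ⟪u, R v⟫ := fun u v => hRpos.isSymmetric u v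
  have hinv : 0 < 1 / P := by positivity
  have hRCR : R ∘L C ∘L R ≠ 0 := fun h => by
    rw [h, norm_zero] at hPle; linarith
  have hC0 : C ≠ 0 := fun h => hRCR (by rw [h]; simp)
  -- Otherwise the Bochner integral would take the junk value `C = 0`.
  have hint : Integrable (fun x => (innerSL ℝ (φ x)).smulRight (φ x)) μ := by
    by_contra h
    exact hC0 (by rw [hC, integral_undef h])
  have hφ2 : Integrable (fun x => ‖φ x‖ ^ 2) μ := by
    have := hint.norm
    simpa only [RegCov.norm_rankOne] using this
  have hCe : ∀ u v, ⟪u, C v⟫ = ∫ x, ⟪φ x, u⟫ * ⟪φ x, v⟫ ∂μ := fun u v => by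
    rw [hC]; exact RegCov.inner_covariance hint u v
  have htr : ∫ x, ‖φ x‖ ^ 2 ∂μ = trC := by
    refine RegCov.integral_norm_sq_eq_trace b hφmeas.aestronglyMeasurable hφ2 ?_
    convert htrC using 2 with i
    rw [real_inner_comm, hCe]
    simp_rw [sq]
  let f : Ω → H := fun x => R (φ x)
  have hf : Measurable f := R.continuous.measurable.comp hφmeas
  have hM : ∀ u v, ⟪u, (R ∘L C ∘L R) v⟫ = ∫ x, ⟪f x, u⟫ * ⟪f x, v⟫ ∂μ := fun u v => by
    simp only [f, ContinuousLinearMap.comp_apply, hRs]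
    rw [← hRs, hCe]
  have hfle : ∀ x, ‖f x‖ ^ 2 ≤ ‖φ x‖ ^ 2 / lam := fun x => by
    rw [le_div_iff₀ hlam, mul_comm]
    exact RegCov.norm_sq_le_of_sq_inverse hDpos hRpos hlam hR₂ (φ x)
  have hf2 : Integrable (fun x => ‖f x‖ ^ 2) μ :=
    (hφ2.div_const lam).mono' (hf.norm.pow_const 2).aestronglyMeasurable
      (Filter.Eventually.of_forall fun x => by
        rw [Real.norm_eq_abs, abs_of_nonneg (sq_nonneg _)]; exact hfle x)
  have hT : ∫ x, ‖f x‖ ^ 2 ∂μ ≤ trC / lam := by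
    rw [← htr, ← integral_div]
    exact integral_mono hf2 (hφ2.div_const lam) hfle
  -- The operator norm of `R C R` is at most its trace.
  have hMT : ‖R ∘L C ∘L R‖ ≤ trC / lam := by
    have e : R ∘L C ∘L R = ∫ x, (innerSL ℝ (f x)).smulRight (f x) ∂μ := by
      have hi : Integrable (fun x => (innerSL ℝ (f x)).smulRight (f x)) μ := by
        refine hf2.mono' ?_ (Filter.Eventually.of_forall fun x => (RegCov.norm_rankOne _).le)
        have hc : Continuous fun u : H => (innerSL ℝ u).smulRight u := by fun_prop
        exact hc.comp_aestronglyMeasurable hf.aestronglyMeasurable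
      ext v
      refine ext_inner_left ℝ fun u => ?_
      rw [hM, RegCov.inner_covariance hi]
    rw [e]
    refine (norm_integral_le_integral_norm _).trans (le_trans (le_of_eq ?_) hT)
    simp_rw [RegCov.norm_rankOne]
  have hNl0 : 0 < Nl := by
    refine hNl.lt_of_ne fun h => hRCR ?_
    have hz : ∀ x, f x = 0 := fun x => by
      have := hNbound x
      rw [← h] at this
      exact norm_eq_zero.1 (pow_eq_zero_iff (two_ne_zero) |>.1 (le_antisymm this (sq_nonneg _)))
    ext v
    refine ext_inner_left ℝ fun u => ?_
    rw [hM]; simp [hz]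
  have hP1 : 1 ≤ P := by
    have := hPle.trans hPge
    rw [div_le_iff₀ hP] at this
    nlinarith
  have hk : 1 ≤ P * (trC / lam) := by
    have := hPle.trans hMT
    rw [div_le_iff₀ hP] at this
    linarith
  obtain ⟨hδ0, hδ1⟩ := hδ
  obtain ⟨hβ, hthr⟩ := RegCov.threshold_le (n := n) hNl hk hδ0 hδ1
  rw [show 2 * P * trC / (lam * δ) = 2 * (P * (trC / lam)) / δ by field_simp,
    show 4 * P * trC / (lam * δ) = 4 * (P * (trC / lam)) / δ by field_simp]
  set β := Real.log (4 * (P * (trC / lam)) / δ) with hβd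
  have key := RegCov.hilbert_tail (μ := μ) b hf hM hNbound hPge hT hNl0 hP hβ hn
  have hexp : trC / lam / P * (32 / 9) * Real.exp (-β) ≤ δ := by
    have hk0 : 0 < P * (trC / lam) := by linarith
    have ht0 : 0 < trC / lam := pos_of_mul_pos_right hk0 hP.le
    rw [Real.exp_neg, hβd, Real.exp_log (by positivity)]
    have : trC / lam / P * (32 / 9) * (4 * (P * (trC / lam)) / δ)⁻¹ = δ * (8 / 9 / P ^ 2) := by
      generalize trC / lam = t at ht0 ⊢
      field_simp
      norm_num
    rw [this]
    refine mul_le_of_le_one_right hδ0.le ?_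
    rw [div_le_one (by positivity)]
    nlinarith
  set good := {x : Fin n → Ω |
    ‖R ∘L (((n : ℝ)⁻¹ • ∑ i : Fin n, (innerSL ℝ (φ (x i))).smulRight (φ (x i))) - C) ∘L R‖ ≤
      4 * Nl * Real.log (2 * (P * (trC / lam)) / δ) / (3 * n) +
        Real.sqrt (2 * P * Nl * β / n)} with hgood
  have hbad : (Measure.pi fun _ : Fin n => μ) goodᶜ ≤ ENNReal.ofReal δ := by
    refine (measure_mono ?_).trans (key.trans (ENNReal.ofReal_le_ofReal hexp))
    intro x hx
    rw [hgood, Set.mem_compl_iff, Set.mem_setOf_eq, not_le] at hx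
    refine lt_of_le_of_lt (add_le_add_left hthr _) (hx.trans_eq ?_)
    congr 1
    ext v
    simp [f, hRs, Finset.smul_sum, map_sum]
  have h1 : (1 : ENNReal) ≤ (Measure.pi fun _ : Fin n => μ) good +
      (Measure.pi fun _ : Fin n => μ) goodᶜ := by
    have := measure_univ_le_add_compl (μ := Measure.pi fun _ : Fin n => μ) good
    rwa [measure_univ] at this
  rw [ENNReal.ofReal_sub _ hδ0.le, ENNReal.ofReal_one, tsub_le_iff_right]
  exact h1.trans (add_le_add_right hbad _)
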